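/- arXiv:2206.01913 — 6 statements merged into one kernel-verified Lean document; each statement's English description precedes it below -/
import Mathlib

section
/- Let K ⊆ ℝⁿ be a compact set and let σ : ℝ → ℝ be continuously differentiable and not a polynomial. Suppose f : K → ℝ^m satisfies ‖f(x) − f(y)‖_∞ ≤ L‖x − y‖_∞ for all x, y ∈ K. Then for every ε > 0 there exist k ∈ ℕ, matrices A ∈ ℝ^{k×n}, C ∈ ℝ^{m×k} and a vector b ∈ ℝ^k such that the one-hidden-layer neural network φ(x) = C·σ(Ax + b) satisfies sup_{x ∈ K} ‖f(x) − φ(x)‖_∞ < ε and ‖φ(x) − φ(y)‖_∞ ≤ (L + ε)‖x − y‖_∞ for all x, y ∈ K. -/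
/-!
Work with `1`-jets `(g, Dg)` on a compact convex set `B`: uniform closeness of jets controls both
the values and, by the mean value inequality, the Lipschitz constant of the difference.

In one variable, let `N` be a closed subspace of `C(K)` containing all `x ↦ ρ (s x + b)` with `ρ`
continuous. It also contains the dilates of the mollifications of `ρ`, hence, differentiating `j`
times in `s` at `s = 0`, every monomial `x ^ j` unless all mollifications of `ρ` are polynomials of
degree less than `j`. So, by Weierstrass, `N` is everything if `ρ` is not a polynomial. For
`ρ = deriv σ` this says that derivatives of networks are uniformly dense; integrating, networks are
`C¹`-dense in one variable, and the jet of any ridge function on `V` lies in the closure of the jets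
of networks.

Fourier inversion writes a smooth compactly supported function as an integral of plane waves, which
are ridge functions, so its jet lies in that closure as well. Finally, a Lipschitz function on `K`
extends to `V` with the same constant, and mollifying the extension makes it smooth without
increasing the constant.
-/

open Filter MeasureTheory Polynomial Set Topology
open scoped ContDiff Convolution FourierTransform SchwartzMap

lemma exists_derivative_eq {k : Type*} [Field k] [CharZero k] (p : k[X]) :
    ∃ P : k[X], derivative P = p := by
  induction p using Polynomial.induction_on' with
  | add p q hp hq =>
    obtain ⟨P, rfl⟩ := hp
    obtain ⟨Q, rfl⟩ := hq
    exact ⟨P + Q, derivative_add⟩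
  | monomial n a =>
    refine ⟨monomial (n + 1) (a / (n + 1)), ?_⟩
    rw [derivative_monomial, Nat.add_sub_cancel, Nat.cast_succ,
      div_mul_cancel₀ _ (Nat.cast_add_one_ne_zero n)]

/-- `u` is the function of a real polynomial. -/
def IsPolynomialFun (u : ℝ → ℝ) : Prop :=
  ∃ p : ℝ[X], ∀ t, u t = p.eval t

lemma IsPolynomialFun.of_deriv {u : ℝ → ℝ} (hu : Differentiable ℝ u)
    (hu' : IsPolynomialFun (deriv u)) : IsPolynomialFun u := by
  obtain ⟨p, hp⟩ := hu'
  obtain ⟨P, rfl⟩ := exists_derivative_eq p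
  have hconst (t : ℝ) : u t - P.eval t = u 0 - P.eval 0 := by
    refine is_const_of_deriv_eq_zero (f := fun t ↦ u t - P.eval t)
      (hu.sub P.differentiable) (fun x ↦ ?_) t 0
    rw [((hu x).hasDerivAt.fun_sub (P.hasDerivAt x)).deriv, hp, sub_self]
  refine ⟨P + C (u 0 - P.eval 0), fun t ↦ ?_⟩
  rw [eval_add, eval_C, ← hconst t, add_sub_cancel]

/-- The polynomial functions `ℝ → ℝ` of degree less than `j`. -/
def polynomialFunLT (j : ℕ) : Submodule ℝ (ℝ → ℝ) :=
  Submodule.span ℝ (range fun (k : Fin j) (t : ℝ) ↦ t ^ (k : ℕ))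

lemma isPolynomialFun_of_mem_polynomialFunLT {j : ℕ} {u : ℝ → ℝ} (hu : u ∈ polynomialFunLT j) :
    IsPolynomialFun u := by
  obtain ⟨c, rfl⟩ := (Submodule.mem_span_range_iff_exists_fun ℝ).1 hu
  exact ⟨∑ k, C (c k) * X ^ (k : ℕ), fun t ↦ by simp [eval_finsetSum]⟩

lemma isClosed_polynomialFunLT (j : ℕ) : IsClosed (polynomialFunLT j : Set (ℝ → ℝ)) :=
  have : FiniteDimensional ℝ (polynomialFunLT j) :=
    FiniteDimensional.span_of_finite ℝ (finite_range _)
  Submodule.closed_of_finiteDimensional _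

lemma mem_polynomialFunLT_of_iteratedDeriv_eq_zero {j : ℕ} {u : ℝ → ℝ} (hu : ContDiff ℝ j u)
    (h : ∀ t, iteratedDeriv j u t = 0) : u ∈ polynomialFunLT j := by
  obtain _ | n := j
  · have : u = 0 := funext fun t ↦ by simpa using h t
    exact this ▸ zero_mem _
  have htaylor (t : ℝ) :
      u t = ∑ k : Fin (n + 1), ((k : ℕ).factorial : ℝ)⁻¹ * iteratedDeriv k u 0 * t ^ (k : ℕ) := by
    obtain rfl | ht := eq_or_ne 0 t
    · rw [Fin.sum_univ_succ]; simp
    obtain ⟨x, -, hx⟩ := taylor_mean_remainder_lagrange_iteratedDeriv ht hu.contDiffOn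
    rw [h, zero_mul, zero_div, sub_eq_zero, taylor_within_apply, Finset.sum_range] at hx
    rw [hx]
    refine Finset.sum_congr rfl fun k _ ↦ ?_
    rw [iteratedDerivWithin_eq_iteratedDeriv (uniqueDiffOn_uIcc ht)
      ((hu.of_le (by exact_mod_cast k.2.le)).contDiffAt) left_mem_uIcc, smul_eq_mul, sub_zero]
    ring
  refine (Submodule.mem_span_range_iff_exists_fun ℝ).2
    ⟨fun k ↦ ((k : ℕ).factorial : ℝ)⁻¹ * iteratedDeriv k u 0, funext fun t ↦ ?_⟩
  simp [htaylor t]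

section ClosedSubmodule

variable {E : Type*} [NormedAddCommGroup E] [NormedSpace ℝ E] {N : Submodule ℝ E}

lemma integral_mem_of_isClosed [CompleteSpace E] {X : Type*} [MeasurableSpace X] {μ : Measure X}
    {c : X → E} (hN : IsClosed (N : Set E)) (hc : Integrable c μ) (hmem : ∀ᵐ t ∂μ, c t ∈ N) :
    ∫ t, c t ∂μ ∈ N := by
  have : IsClosed (N : Set E) := hN
  have hquot : ∫ t, N.mkQL (c t) ∂μ = 0 :=
    integral_eq_zero_of_ae (hmem.mono fun t ht ↦ (Submodule.Quotient.mk_eq_zero N).2 ht)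
  rwa [N.mkQL.integral_comp_comm hc, Submodule.mkQL_apply, Submodule.mkQ_apply,
    Submodule.Quotient.mk_eq_zero] at hquot

lemma mem_of_hasDerivAt_of_isClosed {c : ℝ → E} {c' : E} {s : ℝ} (hN : IsClosed (N : Set E))
    (hc : HasDerivAt c c' s) (hmem : ∀ t, c t ∈ N) : c' ∈ N := by
  have hspan : Submodule.span ℝ (c '' univ) ≤ N :=
    Submodule.span_le.2 (by rintro - ⟨t, -, rfl⟩; exact hmem t)
  exact closure_minimal hspan hN
    (range_deriv_subset_closure_span_image c dense_univ ⟨s, hc.deriv⟩)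

end ClosedSubmodule

lemma hasDerivAt_continuousMap_of_forall_apply {X E : Type*} [TopologicalSpace X] [CompactSpace X]
    [NormedAddCommGroup E] [NormedSpace ℝ E] [CompleteSpace E] {c c' : ℝ → C(X, E)}
    (hc' : Continuous c') (h : ∀ x s, HasDerivAt (fun s ↦ c s x) (c' s x) s) (s : ℝ) :
    HasDerivAt c (c' s) s := by
  have hftc (t : ℝ) : c t = c 0 + ∫ r in (0 : ℝ)..t, c' r := by
    ext x
    have heval : (∫ r in (0 : ℝ)..t, c' r) x = ∫ r in (0 : ℝ)..t, c' r x :=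
      ((ContinuousMap.evalCLM ℝ x).intervalIntegral_comp_comm
        (hc'.intervalIntegrable _ _)).symm
    have hcont : Continuous fun r ↦ c' r x := (ContinuousMap.evalCLM ℝ x).continuous.comp hc'
    rw [ContinuousMap.add_apply, heval, intervalIntegral.integral_eq_sub_of_hasDerivAt
      (fun r _ ↦ h x r) (hcont.intervalIntegrable _ _), add_sub_cancel]
  rw [funext hftc]
  exact (intervalIntegral.integral_hasDerivAt_right (hc'.intervalIntegrable _ _)
    (hc'.stronglyMeasurableAtFilter _ _) hc'.continuousAt).const_add _

section Dilate

variable {K : Set ℝ}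

/-- The continuous function `x ↦ ρ (s * x + b)` on `K`. -/
def dilate (K : Set ℝ) (ρ : C(ℝ, ℝ)) (s b : ℝ) : C(K, ℝ) :=
  ⟨fun x ↦ ρ (s * x + b), by fun_prop⟩

lemma continuous_dilate (ρ : C(ℝ, ℝ)) : Continuous fun p : ℝ × ℝ ↦ dilate K ρ p.1 p.2 := by
  refine ContinuousMap.continuous_of_continuous_uncurry _ ?_
  simp only [Function.uncurry_def, dilate, ContinuousMap.coe_mk]
  fun_prop

/-- The convolution of `ρ` with the normalized bump function `φ`. -/
noncomputable def mollify (φ : ContDiffBump (0 : ℝ)) (ρ : C(ℝ, ℝ)) : C(ℝ, ℝ) :=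
  ⟨φ.normed volume ⋆[ContinuousLinearMap.lsmul ℝ ℝ] ρ,
    φ.hasCompactSupport_normed.continuous_convolution_left _ φ.continuous_normed
      ρ.continuous.locallyIntegrable⟩

lemma contDiff_mollify (φ : ContDiffBump (0 : ℝ)) (ρ : C(ℝ, ℝ)) : ContDiff ℝ ∞ (mollify φ ρ) :=
  φ.hasCompactSupport_normed.contDiff_convolution_left _ φ.contDiff_normed
    ρ.continuous.locallyIntegrable

variable {N : Submodule ℝ C(K, ℝ)}

lemma dilate_mem_of_forall_ne_zero (hN : IsClosed (N : Set C(K, ℝ))) {ρ : C(ℝ, ℝ)}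
    (hρ : ∀ s ≠ 0, ∀ b, dilate K ρ s b ∈ N) (s b : ℝ) : dilate K ρ s b ∈ N := by
  have hclosed : IsClosed {s | dilate K ρ s b ∈ N} :=
    hN.preimage ((continuous_dilate ρ).comp (Continuous.prodMk_left b))
  exact hclosed.closure_subset_iff.2 (fun s hs ↦ hρ s hs b) (dense_compl_singleton (0 : ℝ) s)

variable [CompactSpace K]

lemma dilate_mollify_mem (hN : IsClosed (N : Set C(K, ℝ))) {ρ : C(ℝ, ℝ)}
    (hρ : ∀ s b, dilate K ρ s b ∈ N) (φ : ContDiffBump (0 : ℝ)) (s b : ℝ) :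
    dilate K (mollify φ ρ) s b ∈ N := by
  have hcont : Continuous fun t ↦ φ.normed volume t • dilate K ρ s (b - t) :=
    φ.continuous_normed.smul
      ((continuous_dilate ρ).comp (by fun_prop : Continuous fun t : ℝ ↦ (s, b - t)))
  have hint : Integrable fun t ↦ φ.normed volume t • dilate K ρ s (b - t) :=
    hcont.integrable_of_hasCompactSupport φ.hasCompactSupport_normed.smul_right
  have heq : dilate K (mollify φ ρ) s b = ∫ t, φ.normed volume t • dilate K ρ s (b - t) := by
    ext x
    rw [ContinuousMap.integral_apply hint]
    simp only [dilate, mollify, convolution_def, ContinuousMap.smul_apply, ContinuousMap.coe_mk,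
      ContinuousLinearMap.lsmul_apply, add_sub_assoc]
  rw [heq]
  exact integral_mem_of_isClosed hN hint (ae_of_all _ fun t ↦ N.smul_mem _ (hρ s (b - t)))

/-- The `j`-th derivative with respect to `s` of `x ↦ u (s * x + b)`, for smooth `u`. -/
noncomputable def dilateDeriv (K : Set ℝ) {u : ℝ → ℝ} (hu : ContDiff ℝ ∞ u) (b : ℝ) (j : ℕ)
    (s : ℝ) : C(K, ℝ) :=
  ⟨fun x ↦ iteratedDeriv j u (s * x + b) * (x : ℝ) ^ j, by
    have := hu.continuous_iteratedDeriv j (mod_cast le_top)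
    fun_prop⟩

lemma hasDerivAt_dilateDeriv {u : ℝ → ℝ} (hu : ContDiff ℝ ∞ u) (b : ℝ) (j : ℕ) (s : ℝ) :
    HasDerivAt (dilateDeriv K hu b j) (dilateDeriv K hu b (j + 1) s) s := by
  refine hasDerivAt_continuousMap_of_forall_apply ?_ (fun x s ↦ ?_) s
  · refine ContinuousMap.continuous_of_continuous_uncurry _ ?_
    have := hu.continuous_iteratedDeriv (j + 1) (mod_cast le_top)
    simp only [Function.uncurry_def, dilateDeriv, ContinuousMap.coe_mk]
    fun_prop
  · have houter : HasDerivAt (iteratedDeriv j u) (iteratedDeriv (j + 1) u (s * x + b))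
        (s * x + b) := by
      rw [iteratedDeriv_succ]
      exact (hu.differentiable_iteratedDeriv j (mod_cast WithTop.coe_lt_top _) _).hasDerivAt
    have hinner : HasDerivAt (fun s : ℝ ↦ s * x + b) x s :=
      (hasDerivAt_mul_const _).add_const b
    refine ((houter.comp s hinner).mul_const ((x : ℝ) ^ j)).congr_deriv ?_
    simp only [dilateDeriv, ContinuousMap.coe_mk]
    ring

lemma iteratedDeriv_smul_pow_mem (hN : IsClosed (N : Set C(K, ℝ))) {u : C(ℝ, ℝ)}
    (hu : ContDiff ℝ ∞ u) {b : ℝ} (hmem : ∀ s, dilate K u s b ∈ N) (j : ℕ) :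
    iteratedDeriv j u b • (X ^ j : ℝ[X]).toContinuousMapOn K ∈ N := by
  have hderiv (s : ℝ) : dilateDeriv K hu b j s ∈ N := by
    induction j generalizing s with
    | zero => simpa [dilateDeriv, dilate] using hmem s
    | succ j ih => exact mem_of_hasDerivAt_of_isClosed hN (hasDerivAt_dilateDeriv hu b j s) ih
  convert hderiv 0 using 1
  ext x
  simp [dilateDeriv]

/-- Otherwise all mollifications of `ρ`, and with them their pointwise limit `ρ`, would be
polynomials of degree less than `j`. -/
lemma exists_iteratedDeriv_mollify_ne_zero {ρ : C(ℝ, ℝ)} (hρ : ¬ IsPolynomialFun ρ) (j : ℕ) :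
    ∃ φ b, iteratedDeriv j (mollify φ ρ) b ≠ 0 := by
  by_contra! hzero
  let φ (i : ℕ) : ContDiffBump (0 : ℝ) :=
    ⟨1 / ((i : ℝ) + 1) / 2, 1 / ((i : ℝ) + 1), by positivity, half_lt_self (by positivity)⟩
  have hlim : Tendsto (fun i ↦ (mollify (φ i) ρ : ℝ → ℝ)) atTop (𝓝 ρ) :=
    tendsto_pi_nhds.2 fun t ↦ ContDiffBump.convolution_tendsto_right_of_continuous
      tendsto_one_div_add_atTop_nhds_zero_nat ρ.continuous t
  refine hρ (isPolynomialFun_of_mem_polynomialFunLT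
    ((isClosed_polynomialFunLT j).mem_of_tendsto hlim (Eventually.of_forall fun i ↦ ?_)))
  exact mem_polynomialFunLT_of_iteratedDeriv_eq_zero
    ((contDiff_mollify _ ρ).of_le (mod_cast le_top)) (hzero _)

theorem eq_top_of_forall_dilate_mem (hN : IsClosed (N : Set C(K, ℝ))) {ρ : C(ℝ, ℝ)}
    (hρ : ¬ IsPolynomialFun ρ) (hmem : ∀ s ≠ 0, ∀ b, dilate K ρ s b ∈ N) : N = ⊤ := by
  have hpow (j : ℕ) : (X ^ j : ℝ[X]).toContinuousMapOn K ∈ N := by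
    obtain ⟨φ, b, hb⟩ := exists_iteratedDeriv_mollify_ne_zero hρ j
    rw [← N.smul_mem_iff hb]
    exact iteratedDeriv_smul_pow_mem hN (contDiff_mollify φ ρ)
      (fun s ↦ dilate_mollify_mem hN (dilate_mem_of_forall_ne_zero hN hmem) φ s b) j
  have hpoly (p : ℝ[X]) : toContinuousMapOnAlgHom K p ∈ N := by
    induction p using Polynomial.induction_on' with
    | add p q hp hq => exact map_add (toContinuousMapOnAlgHom K) p q ▸ N.add_mem hp hq
    | monomial k a =>
      rw [← C_mul_X_pow_eq_monomial, ← smul_eq_C_mul, map_smul]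
      exact N.smul_mem a (hpow k)
  have hdense : closure (polynomialFunctions K : Set C(K, ℝ)) = univ := by
    rw [← Subalgebra.topologicalClosure_coe, polynomialFunctions.topologicalClosure,
      Algebra.coe_top]
  refine Submodule.eq_top_iff'.2 fun f ↦ closure_minimal ?_ hN (hdense ▸ mem_univ f)
  rw [polynomialFunctions_coe]
  exact range_subset_iff.2 hpoly

end Dilate

section Networks

variable {V : Type*} [NormedAddCommGroup V] [NormedSpace ℝ V]

/-- The space `C¹(V, ℝ)` of continuously differentiable functions. -/
def c1Functions (V : Type*) [NormedAddCommGroup V] [NormedSpace ℝ V] : Submodule ℝ (V → ℝ) where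
  carrier := {g | ContDiff ℝ 1 g}
  zero_mem' := mem_ofPred.2 contDiff_const
  add_mem' hg hh := mem_ofPred.2 ((mem_ofPred.1 hg).add (mem_ofPred.1 hh))
  smul_mem' a _ hg := mem_ofPred.2 ((mem_ofPred.1 hg).const_smul a)

lemma mem_c1Functions {g : V → ℝ} : g ∈ c1Functions V ↔ ContDiff ℝ 1 g :=
  mem_ofPred

lemma contDiff_c1Functions (g : c1Functions V) : ContDiff ℝ 1 (g : V → ℝ) :=
  mem_c1Functions.1 g.2

lemma differentiable_c1Functions (g : c1Functions V) : Differentiable ℝ (g : V → ℝ) :=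
  (contDiff_c1Functions g).differentiable one_ne_zero

lemma continuous_deriv_c1Functions (u : c1Functions ℝ) : Continuous (deriv (u : ℝ → ℝ)) :=
  (contDiff_c1Functions u).continuous_deriv le_rfl

/-- The ridge function `x ↦ u (ℓ x)` with profile `u` and direction `ℓ`. -/
def ridge (ℓ : V →L[ℝ] ℝ) : c1Functions ℝ →ₗ[ℝ] c1Functions V where
  toFun u := ⟨fun x ↦ (u : ℝ → ℝ) (ℓ x),
    mem_c1Functions.2 ((contDiff_c1Functions u).comp ℓ.contDiff)⟩
  map_add' _ _ := rfl
  map_smul' _ _ := rfl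

/-- The function `x ↦ σ (ℓ x + b)` computed by a single hidden unit. -/
def neuron (σ : c1Functions ℝ) (ℓ : V →L[ℝ] ℝ) (b : ℝ) : c1Functions V :=
  ⟨fun x ↦ (σ : ℝ → ℝ) (ℓ x + b),
    mem_c1Functions.2 ((contDiff_c1Functions σ).comp (ℓ.contDiff.add contDiff_const))⟩

/-- The scalar one-hidden-layer networks on `V` with activation `σ`. -/
def networks (V : Type*) [NormedAddCommGroup V] [NormedSpace ℝ V] (σ : c1Functions ℝ) :
    Submodule ℝ (c1Functions V) :=
  Submodule.span ℝ (range fun p : (V →L[ℝ] ℝ) × ℝ ↦ neuron σ p.1 p.2)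

variable {σ : c1Functions ℝ}

lemma neuron_mem_networks (ℓ : V →L[ℝ] ℝ) (b : ℝ) : neuron σ ℓ b ∈ networks V σ :=
  Submodule.subset_span ⟨(ℓ, b), rfl⟩

lemma ridge_mem_networks (ℓ : V →L[ℝ] ℝ) {ψ : c1Functions ℝ} (hψ : ψ ∈ networks ℝ σ) :
    ridge ℓ ψ ∈ networks V σ := by
  suffices (networks ℝ σ).map (ridge ℓ) ≤ networks V σ from
    this (Submodule.mem_map_of_mem hψ)
  refine (Submodule.map_span_le _ _ _).2 ?_
  rintro - ⟨⟨m, b⟩, rfl⟩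
  exact neuron_mem_networks (m.comp ℓ) b

lemma const_mem_networks (hσ : σ ≠ 0) (a : ℝ) :
    (⟨fun _ ↦ a, mem_c1Functions.2 contDiff_const⟩ : c1Functions V) ∈ networks V σ := by
  obtain ⟨b, hb⟩ : ∃ b, (σ : ℝ → ℝ) b ≠ 0 := by
    by_contra! hzero
    exact hσ (Subtype.ext (funext hzero))
  convert (networks V σ).smul_mem (a / (σ : ℝ → ℝ) b) (neuron_mem_networks 0 b) using 1
  ext x
  simp [neuron, hb]

/-- Restriction to `K` of the derivative of a `C¹` function of one variable. -/
noncomputable def derivOn (K : Set ℝ) : c1Functions ℝ →ₗ[ℝ] C(K, ℝ) where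
  toFun u := ⟨fun t ↦ deriv (u : ℝ → ℝ) t, by
    have := continuous_deriv_c1Functions u
    fun_prop⟩
  map_add' u v := ContinuousMap.ext fun t ↦
    deriv_add (differentiable_c1Functions u t) (differentiable_c1Functions v t)
  map_smul' a u := ContinuousMap.ext fun t ↦
    deriv_const_smul a (differentiable_c1Functions u t)

lemma dilate_deriv_eq_derivOn (K : Set ℝ) {s : ℝ} (hs : s ≠ 0) (b : ℝ) :
    dilate K ⟨deriv (σ : ℝ → ℝ), continuous_deriv_c1Functions σ⟩ s b =
      derivOn K (s⁻¹ • neuron σ (s • ContinuousLinearMap.id ℝ ℝ) b) := by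
  ext t
  have hinner : HasDerivAt (fun t : ℝ ↦ s * t + b) s t :=
    (hasDerivAt_const_mul s).add_const b
  have hneuron : HasDerivAt (fun t : ℝ ↦ (σ : ℝ → ℝ) (s * t + b))
      (deriv (σ : ℝ → ℝ) (s * t + b) * s) t :=
    (differentiable_c1Functions σ _).hasDerivAt.comp (t : ℝ) hinner
  rw [map_smul]
  change deriv (σ : ℝ → ℝ) (s * t + b) = s⁻¹ * deriv (fun t : ℝ ↦ (σ : ℝ → ℝ) (s * t + b)) t
  rw [hneuron.deriv]
  field_simp

lemma topologicalClosure_map_derivOn_networks (hσ : ¬ IsPolynomialFun σ) (K : Set ℝ)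
    [CompactSpace K] : ((networks ℝ σ).map (derivOn K)).topologicalClosure = ⊤ := by
  refine eq_top_of_forall_dilate_mem (ρ := ⟨deriv σ, continuous_deriv_c1Functions σ⟩)
    (Submodule.isClosed_topologicalClosure _)
    (fun h ↦ hσ (.of_deriv (differentiable_c1Functions σ) h)) fun s hs b ↦ ?_
  rw [dilate_deriv_eq_derivOn K hs b]
  exact Submodule.le_topologicalClosure _ (Submodule.mem_map_of_mem
    (Submodule.smul_mem _ _ (neuron_mem_networks _ b)))

lemma abs_le_of_abs_deriv_le {w : ℝ → ℝ} (hw : Differentiable ℝ w) (hw0 : w 0 = 0) {S η : ℝ}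
    (hderiv : ∀ t ∈ Icc (-S) S, |deriv w t| ≤ η) {t : ℝ} (ht : t ∈ Icc (-S) S) :
    |w t| ≤ η * S := by
  have hS : 0 ≤ S := (abs_nonneg t).trans (abs_le.2 ht)
  have hη : 0 ≤ η := (abs_nonneg _).trans (hderiv t ht)
  have hmvt := (convex_Icc (-S) S).norm_image_sub_le_of_norm_deriv_le (fun z _ ↦ hw z) hderiv
    (mem_Icc.2 ⟨neg_nonpos.2 hS, hS⟩) ht
  rw [hw0, sub_zero, sub_zero] at hmvt
  exact hmvt.trans (mul_le_mul_of_nonneg_left (abs_le.2 ht) hη)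

lemma exists_mem_networks_real_near (hσ : ¬ IsPolynomialFun σ) (u : c1Functions ℝ) {S δ : ℝ}
    (hS : 0 ≤ S) (hδ : 0 < δ) :
    ∃ ψ ∈ networks ℝ σ, ∀ t ∈ Icc (-S) S, |(u - ψ : ℝ → ℝ) t| ≤ δ ∧
      |deriv (u - ψ : ℝ → ℝ) t| ≤ δ := by
  have hσ0 : σ ≠ 0 := by
    rintro rfl
    exact hσ ⟨0, fun t ↦ by simp⟩
  set η := δ / (S + 1)
  have hη : 0 < η := by positivity
  have hηδ : η ≤ δ := div_le_self hδ.le (by linarith)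
  have hηS : η * S ≤ δ := by
    rw [div_mul_eq_mul_div, div_le_iff₀ (by positivity)]
    linarith
  have hmem : derivOn (Icc (-S) S) u ∈ closure ((networks ℝ σ).map (derivOn (Icc (-S) S))) := by
    rw [← Submodule.topologicalClosure_coe, topologicalClosure_map_derivOn_networks hσ]
    exact Submodule.mem_top
  obtain ⟨-, ⟨ψ₀, hψ₀, rfl⟩, hdist⟩ := Metric.mem_closure_iff.1 hmem η hη
  let ψ : c1Functions ℝ := ψ₀ + ⟨fun _ ↦ (u - ψ₀ : ℝ → ℝ) 0, mem_c1Functions.2 contDiff_const⟩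
  have hderiv (t : ℝ) (ht : t ∈ Icc (-S) S) : |deriv (u - ψ : ℝ → ℝ) t| ≤ η := by
    have happly := (ContinuousMap.dist_apply_le_dist ⟨t, ht⟩).trans hdist.le
    have hsub : (u - ψ : ℝ → ℝ) = fun t ↦ (u - ψ₀ : ℝ → ℝ) t - (u - ψ₀ : ℝ → ℝ) 0 := by
      ext t
      simp only [ψ, Submodule.coe_add, Pi.sub_apply, Pi.add_apply]
      ring
    rw [hsub, deriv_sub_const, deriv_sub (differentiable_c1Functions u t)
      (differentiable_c1Functions ψ₀ t)]
    exact happly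
  refine ⟨ψ, add_mem hψ₀ (const_mem_networks hσ0 _), fun t ht ↦
    ⟨(abs_le_of_abs_deriv_le ?_ ?_ hderiv ht).trans hηS, (hderiv t ht).trans hηδ⟩⟩
  · exact (differentiable_c1Functions u).sub (differentiable_c1Functions ψ)
  · simp [ψ]

/-- The `1`-jet `(x, v) ↦ (g x, Dg x v)` of a `C¹` function over `B`, restricted to tangent vectors
in the closed unit ball. When `B` is compact, uniform convergence of jets is `C¹` convergence on
`B`. -/
noncomputable def jet (B : Set V) :
    c1Functions V →ₗ[ℝ] C(B × Metric.closedBall (0 : V) 1, ℝ × ℝ) where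
  toFun g := ⟨fun p ↦ ((g : V → ℝ) p.1, fderiv ℝ (g : V → ℝ) p.1 p.2), by
    have hg : Continuous (g : V → ℝ) := (differentiable_c1Functions g).continuous
    have hg' : Continuous (fderiv ℝ (g : V → ℝ)) :=
      (contDiff_c1Functions g).continuous_fderiv one_ne_zero
    fun_prop⟩
  map_add' g h := ContinuousMap.ext fun p ↦ Prod.ext rfl congr($(fderiv_add
    (differentiable_c1Functions g p.1) (differentiable_c1Functions h p.1)) p.2)
  map_smul' a g := ContinuousMap.ext fun p ↦ Prod.ext rfl congr($(fderiv_const_smul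
    (differentiable_c1Functions g p.1) a) p.2)

lemma jet_ridge_apply {B : Set V} (ℓ : V →L[ℝ] ℝ) (u : c1Functions ℝ)
    (p : B × Metric.closedBall (0 : V) 1) :
    jet B (ridge ℓ u) p = ((u : ℝ → ℝ) (ℓ p.1), deriv (u : ℝ → ℝ) (ℓ p.1) * ℓ p.2) :=
  Prod.ext rfl congr($(((differentiable_c1Functions u (ℓ p.1)).hasDerivAt.comp_hasFDerivAt
    (p.1 : V) ℓ.hasFDerivAt).fderiv) p.2)

section Compact

variable [ProperSpace V] {B : Set V} [CompactSpace B]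

lemma norm_jet_ridge_le (ℓ : V →L[ℝ] ℝ) (u : c1Functions ℝ) {C D : ℝ} (hC : 0 ≤ C)
    (hu : ∀ x ∈ B, |(u : ℝ → ℝ) (ℓ x)| ≤ C) (hu' : ∀ x ∈ B, |deriv (u : ℝ → ℝ) (ℓ x)| ≤ D) :
    ‖jet B (ridge ℓ u)‖ ≤ max C (D * ‖ℓ‖) := by
  refine (ContinuousMap.norm_le _ (le_max_of_le_left hC)).2 fun ⟨⟨x, hx⟩, ⟨v, hv⟩⟩ ↦ ?_
  rw [jet_ridge_apply, Prod.norm_mk, norm_mul]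
  have hℓv : ‖ℓ v‖ ≤ ‖ℓ‖ := ℓ.unit_le_opNorm v (mem_closedBall_zero_iff.1 hv)
  exact max_le_max (hu x hx)
    (mul_le_mul (hu' x hx) hℓv (norm_nonneg _) ((abs_nonneg _).trans (hu' x hx)))

lemma jet_ridge_mem_closure (hσ : ¬ IsPolynomialFun σ) (ℓ : V →L[ℝ] ℝ) (u : c1Functions ℝ) :
    jet B (ridge ℓ u) ∈ ((networks V σ).map (jet B)).topologicalClosure := by
  obtain ⟨S, hS⟩ := (isCompact_iff_compactSpace.2 ‹_› : IsCompact B).exists_bound_of_continuousOn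
    ℓ.continuous.continuousOn
  have hmem (x : V) (hx : x ∈ B) : ℓ x ∈ Icc (-|S|) |S| :=
    abs_le.1 ((hS x hx).trans (le_abs_self S))
  rw [← SetLike.mem_coe, Submodule.topologicalClosure_coe, Metric.mem_closure_iff]
  intro ε hε
  have hδ : 0 < ε / 2 / (‖ℓ‖ + 1) := by positivity
  obtain ⟨ψ, hψ, hnear⟩ := exists_mem_networks_real_near hσ u (abs_nonneg S) hδ
  refine ⟨_, Submodule.mem_map_of_mem (ridge_mem_networks ℓ hψ), ?_⟩
  rw [dist_eq_norm, ← map_sub, ← map_sub]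
  refine (norm_jet_ridge_le ℓ (u - ψ) hδ.le (fun x hx ↦ (hnear _ (hmem x hx)).1)
    (fun x hx ↦ (hnear _ (hmem x hx)).2)).trans_lt (max_lt ?_ ?_)
  · exact (div_le_self (by positivity) (by linarith [norm_nonneg ℓ])).trans_lt (half_lt_self hε)
  · rw [div_mul_eq_mul_div, div_lt_iff₀ (by positivity)]
    nlinarith [norm_nonneg ℓ]

lemma norm_fderiv_le_norm_jet (g : c1Functions V) {x : V} (hx : x ∈ B) :
    ‖fderiv ℝ (g : V → ℝ) x‖ ≤ ‖jet B g‖ :=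
  ContinuousLinearMap.opNorm_le_of_unit_norm (norm_nonneg _) fun v hv ↦ (norm_snd_le _).trans
    ((jet B g).norm_coe_le_norm (⟨x, hx⟩, ⟨v, mem_closedBall_zero_iff.2 hv.le⟩))

lemma abs_fst_sub_le_of_mem_closure_jet (hB : Convex ℝ B)
    {e : C(B × Metric.closedBall (0 : V) 1, ℝ × ℝ)} (he : e ∈ closure (range (jet B)))
    (p q : B × Metric.closedBall (0 : V) 1) :
    |(e p).1 - (e q).1| ≤ ‖e‖ * ‖(p.1 : V) - q.1‖ := by
  have hclosed : IsClosed {e : C(B × Metric.closedBall (0 : V) 1, ℝ × ℝ) |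
      |(e p).1 - (e q).1| ≤ ‖e‖ * ‖(p.1 : V) - q.1‖} :=
    isClosed_le (by fun_prop) (by fun_prop)
  refine closure_minimal ?_ hclosed he
  rintro - ⟨g, rfl⟩
  exact hB.norm_image_sub_le_of_norm_fderiv_le (fun z _ ↦ differentiable_c1Functions g z)
    (fun z hz ↦ norm_fderiv_le_norm_jet g hz) q.1.2 p.1.2

end Compact

end Networks

section Fourier

/-- The oscillation `t ↦ Re (z e^{-2πit})` of complex amplitude `z`. -/
noncomputable def wave (z : ℂ) : c1Functions ℝ :=
  ⟨fun t ↦ (Complex.exp ((-2 * Real.pi * t : ℝ) * Complex.I) * z).re, mem_c1Functions.2 <|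
    Complex.reCLM.contDiff.comp <| ((Complex.ofRealCLM.contDiff.comp
      (contDiff_const.mul contDiff_id)).mul contDiff_const).cexp.mul contDiff_const⟩

lemma wave_apply (z : ℂ) (t : ℝ) :
    (wave z : ℝ → ℝ) t = (Complex.exp ((-2 * Real.pi * t : ℝ) * Complex.I) * z).re :=
  rfl

lemma deriv_wave (z : ℂ) (t : ℝ) :
    deriv (wave z : ℝ → ℝ) t = (wave (-2 * Real.pi * Complex.I * z) : ℝ → ℝ) t := by
  have hphase : HasDerivAt (fun t : ℝ ↦ ((-2 * Real.pi * t : ℝ) : ℂ) * Complex.I)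
      ((-2 * Real.pi : ℝ) * Complex.I) t :=
    (hasDerivAt_const_mul (-2 * Real.pi)).ofReal_comp.mul_const _
  refine (Complex.reCLM.hasFDerivAt.comp_hasDerivAt t (hphase.cexp.mul_const z)).deriv.trans ?_
  rw [wave_apply, Complex.reCLM_apply]
  push_cast
  ring_nf

lemma abs_wave_le (z : ℂ) (t : ℝ) : |(wave z : ℝ → ℝ) t| ≤ ‖z‖ := by
  refine (Complex.abs_re_le_norm _).trans_eq ?_
  rw [norm_mul, Complex.norm_exp_ofReal_mul_I, one_mul]

lemma abs_deriv_wave_le (z : ℂ) (t : ℝ) : |deriv (wave z : ℝ → ℝ) t| ≤ 2 * Real.pi * ‖z‖ := by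
  rw [deriv_wave]
  refine (abs_wave_le _ t).trans_eq ?_
  simp [abs_of_pos Real.pi_pos]

variable {E : Type*} [NormedAddCommGroup E] [InnerProductSpace ℝ E]
  {V : Type*} [NormedAddCommGroup V] [NormedSpace ℝ V] {B : Set V}

/-- The plane wave `x ↦ Re (z e^{-2πi⟪v, T x⟫})` of frequency `v` and amplitude `z`, pulled back
along `T`. It is a ridge function. -/
noncomputable def planeWave (T : V →L[ℝ] E) (v : E) (z : ℂ) : c1Functions V :=
  ridge (innerSL ℝ v ∘L T) (wave z)

lemma continuous_jet_planeWave (T : V →L[ℝ] E) :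
    Continuous fun q : E × ℂ ↦ jet B (planeWave T q.1 q.2) := by
  refine ContinuousMap.continuous_of_continuous_uncurry _ ?_
  simp only [Function.uncurry_def, planeWave, jet_ridge_apply, deriv_wave, wave_apply,
    ContinuousLinearMap.comp_apply, innerSL_apply_apply]
  fun_prop

lemma norm_jet_planeWave_le [ProperSpace V] [CompactSpace B] (T : V →L[ℝ] E) (v : E) (z : ℂ) :
    ‖jet B (planeWave T v z)‖ ≤ ‖z‖ + 2 * Real.pi * ‖T‖ * (‖v‖ * ‖z‖) := by
  have hdirection : ‖innerSL ℝ v ∘L T‖ ≤ ‖v‖ * ‖T‖ :=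
    (ContinuousLinearMap.opNorm_comp_le _ _).trans_eq (by rw [innerSL_apply_norm])
  calc ‖jet B (planeWave T v z)‖
      ≤ max ‖z‖ (2 * Real.pi * ‖z‖ * ‖innerSL ℝ v ∘L T‖) :=
        norm_jet_ridge_le _ _ (norm_nonneg z) (fun x _ ↦ abs_wave_le _ _)
          (fun x _ ↦ abs_deriv_wave_le _ _)
    _ ≤ ‖z‖ + 2 * Real.pi * ‖z‖ * (‖v‖ * ‖T‖) :=
        (max_le_add_of_nonneg (by positivity) (by positivity)).trans (by gcongr)
    _ = ‖z‖ + 2 * Real.pi * ‖T‖ * (‖v‖ * ‖z‖) := by ring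

variable [FiniteDimensional ℝ E] [MeasurableSpace E] [BorelSpace E]

lemma re_eq_integral_wave (H : 𝓢(E, ℂ)) (x : E) :
    (H x).re = ∫ v, (wave ((𝓕⁻ H : 𝓢(E, ℂ)) v) : ℝ → ℝ) (inner ℝ v x) := by
  set G : 𝓢(E, ℂ) := 𝓕⁻ H
  have hint : Integrable fun v ↦
      Complex.exp ((-2 * Real.pi * inner ℝ v x : ℝ) * Complex.I) * G v := by
    refine G.integrable.mono (by fun_prop) (ae_of_all _ fun v ↦ ?_)
    rw [norm_mul, Complex.norm_exp_ofReal_mul_I, one_mul]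
  have hinversion : 𝓕 G = H := FourierTransform.fourier_fourierInv_eq H
  rw [← hinversion, SchwartzMap.fourier_coe, Real.fourier_eq']
  exact (Complex.reCLM.integral_comp_comm hint).symm

variable [ProperSpace V] [CompactSpace B]

lemma integrable_jet_planeWave (T : V →L[ℝ] E) (G : 𝓢(E, ℂ)) :
    Integrable fun v ↦ jet B (planeWave T v (G v)) := by
  have hbound : Integrable fun v ↦ ‖G v‖ + 2 * Real.pi * ‖T‖ * (‖v‖ * ‖G v‖) := by
    have hmoment := G.integrable_pow_mul volume 1
    simp only [pow_one] at hmoment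
    exact G.integrable.norm.add (hmoment.const_mul _)
  exact hbound.mono' ((continuous_jet_planeWave T).comp
    (continuous_id.prodMk G.continuous)).aestronglyMeasurable
    (ae_of_all _ fun v ↦ norm_jet_planeWave_le T v (G v))

variable {σ : c1Functions ℝ}

lemma exists_mem_closure_jet_of_schwartzMap (hσ : ¬ IsPolynomialFun σ) (T : V →L[ℝ] E)
    (H : 𝓢(E, ℂ)) :
    ∃ e ∈ ((networks V σ).map (jet B)).topologicalClosure, ∀ p, (e p).1 = (H (T p.1)).re := by
  let G : 𝓢(E, ℂ) := 𝓕⁻ H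
  have hint : Integrable fun v ↦ jet B (planeWave T v (G v)) := integrable_jet_planeWave T G
  refine ⟨∫ v, jet B (planeWave T v (G v)), integral_mem_of_isClosed
    (Submodule.isClosed_topologicalClosure _) hint
    (ae_of_all _ fun v ↦ jet_ridge_mem_closure hσ _ _), fun p ↦ ?_⟩
  have happly : Integrable fun v ↦ jet B (planeWave T v (G v)) p :=
    (ContinuousMap.evalCLM ℝ p).integrable_comp hint
  rw [ContinuousMap.integral_apply hint, fst_integral happly, re_eq_integral_wave]
  rfl

end Fourier

lemma exists_schwartzMap_eqOn {E : Type*} [NormedAddCommGroup E] [InnerProductSpace ℝ E]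
    [FiniteDimensional ℝ E] {g : E → ℝ} (hg : ContDiff ℝ ∞ g) {B : Set E}
    (hB : Bornology.IsBounded B) : ∃ H : 𝓢(E, ℂ), ∀ x ∈ B, H x = g x := by
  obtain ⟨R, hR, hBR⟩ := hB.subset_closedBall_lt 0 0
  let χ : ContDiffBump (0 : E) := ⟨R, R + 1, hR, lt_add_one R⟩
  have hsmooth : ContDiff ℝ ∞ fun x ↦ ((χ x * g x : ℝ) : ℂ) :=
    Complex.ofRealCLM.contDiff.comp (χ.contDiff.mul hg)
  have hsupport : HasCompactSupport fun x ↦ ((χ x * g x : ℝ) : ℂ) :=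
    (χ.hasCompactSupport.mul_right (f' := g)).comp_left (g := Complex.ofReal) Complex.ofReal_zero
  refine ⟨hsupport.toSchwartzMap hsmooth, fun x hx ↦ ?_⟩
  rw [HasCompactSupport.toSchwartzMap_toFun, χ.one_of_mem_closedBall (hBR hx), one_mul]

section FiniteDimensional

variable {V : Type*} [NormedAddCommGroup V] [NormedSpace ℝ V] [FiniteDimensional ℝ V]
  {σ : c1Functions ℝ}

lemma exists_mem_closure_jet_of_contDiff (hσ : ¬ IsPolynomialFun σ) {B : Set V} [CompactSpace B]
    {g : V → ℝ} (hg : ContDiff ℝ ∞ g) :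
    ∃ e ∈ ((networks V σ).map (jet B)).topologicalClosure, ∀ p, (e p).1 = g p.1 := by
  have := FiniteDimensional.proper_real V
  let T : V ≃L[ℝ] EuclideanSpace ℝ (Fin (Module.finrank ℝ V)) := toEuclidean
  have hcompact : IsCompact (T '' B) :=
    (isCompact_iff_compactSpace.2 ‹CompactSpace B›).image T.continuous
  obtain ⟨H, hH⟩ := exists_schwartzMap_eqOn (hg.comp T.symm.contDiff) hcompact.isBounded
  obtain ⟨e, he, heH⟩ := exists_mem_closure_jet_of_schwartzMap (B := B) hσ (T : V →L[ℝ] _) H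
  refine ⟨e, he, fun p ↦ ?_⟩
  rw [heH, ContinuousLinearEquiv.coe_coe, hH _ (mem_image_of_mem T p.1.2), Complex.ofReal_re,
    Function.comp_apply, T.symm_apply_apply]

lemma exists_mem_networks_near_of_contDiff (hσ : ¬ IsPolynomialFun σ) {B : Set V}
    (hB : IsCompact B) (hconvex : Convex ℝ B) {g : V → ℝ} (hg : ContDiff ℝ ∞ g) {δ : ℝ}
    (hδ : 0 < δ) :
    ∃ h ∈ networks V σ, ∀ x ∈ B, |(g - h : V → ℝ) x| ≤ δ ∧
      ∀ y ∈ B, |(g - h : V → ℝ) x - (g - h : V → ℝ) y| ≤ δ * ‖x - y‖ := by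
  have := FiniteDimensional.proper_real V
  have := isCompact_iff_compactSpace.1 hB
  obtain ⟨e, he, heg⟩ := exists_mem_closure_jet_of_contDiff (B := B) hσ hg
  have hrange : ((networks V σ).map (jet B)).topologicalClosure ≤
      (LinearMap.range (jet B)).topologicalClosure :=
    Submodule.topologicalClosure_mono LinearMap.map_le_range
  obtain ⟨-, ⟨h, hh, rfl⟩, hdist⟩ := Metric.mem_closure_iff.1 he δ hδ
  rw [dist_eq_norm] at hdist
  have hmem : e - jet B h ∈ closure (range (jet B)) :=
    sub_mem (hrange he) (Submodule.le_topologicalClosure _ ⟨h, rfl⟩)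
  have hfst (p) : ((e - jet B h) p).1 = (g - h : V → ℝ) p.1 :=
    congr($(heg p) - (h : V → ℝ) p.1)
  let origin : Metric.closedBall (0 : V) 1 := ⟨0, Metric.mem_closedBall_self zero_le_one⟩
  refine ⟨h, hh, fun x hx ↦ ⟨?_, fun y hy ↦ ?_⟩⟩
  · have := (norm_fst_le _).trans ((e - jet B h).norm_coe_le_norm (⟨x, hx⟩, origin))
    rw [hfst] at this
    exact this.trans hdist.le
  · have := abs_fst_sub_le_of_mem_closure_jet hconvex hmem (⟨x, hx⟩, origin) (⟨y, hy⟩, origin)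
    rw [hfst, hfst] at this
    exact this.trans (mul_le_mul_of_nonneg_right hdist.le (norm_nonneg _))

end FiniteDimensional

section Mollification

variable {V : Type*} [NormedAddCommGroup V] [NormedSpace ℝ V] [FiniteDimensional ℝ V]
  {F : Type*} [NormedAddCommGroup F] [NormedSpace ℝ F] {g : V → F} {L : NNReal}

lemma lipschitzWith_normed_convolution [MeasurableSpace V] [BorelSpace V] {μ : Measure V}
    [IsLocallyFiniteMeasure μ] [μ.IsOpenPosMeasure] (φ : ContDiffBump (0 : V))
    (hg : LipschitzWith L g) :
    LipschitzWith L (φ.normed μ ⋆[ContinuousLinearMap.lsmul ℝ ℝ, μ] g) := by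
  have hint (x : V) : Integrable (fun t ↦ φ.normed μ t • g (x - t)) μ :=
    (φ.continuous_normed.smul (hg.continuous.comp (by fun_prop))).integrable_of_hasCompactSupport
      φ.hasCompactSupport_normed.smul_right
  refine LipschitzWith.of_dist_le_mul fun x y ↦ ?_
  have hpointwise (t : V) : ‖φ.normed μ t • g (x - t) - φ.normed μ t • g (y - t)‖ ≤
      φ.normed μ t * (L * dist x y) := by
    rw [← smul_sub, norm_smul, Real.norm_of_nonneg (φ.nonneg_normed t), ← dist_eq_norm]
    refine mul_le_mul_of_nonneg_left ?_ (φ.nonneg_normed t)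
    simpa only [dist_sub_right] using hg.dist_le_mul (x - t) (y - t)
  simp only [convolution_def, ContinuousLinearMap.lsmul_apply]
  rw [dist_eq_norm, ← integral_sub (hint x) (hint y)]
  refine (norm_integral_le_of_norm_le (φ.integrable_normed.mul_const _)
    (ae_of_all _ hpointwise)).trans_eq ?_
  rw [integral_mul_const, φ.integral_normed, one_mul]

lemma exists_contDiff_lipschitzWith_dist_le [CompleteSpace F] (hg : LipschitzWith L g) {δ : ℝ}
    (hδ : 0 < δ) :
    ∃ m : V → F, ContDiff ℝ ∞ m ∧ LipschitzWith L m ∧ ∀ x, dist (m x) (g x) ≤ δ := by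
  borelize V
  let φ : ContDiffBump (0 : V) :=
    ⟨δ / (L + 1) / 2, δ / (L + 1), by positivity, half_lt_self (by positivity)⟩
  refine ⟨φ.normed Measure.addHaar ⋆[ContinuousLinearMap.lsmul ℝ ℝ, Measure.addHaar] g,
    φ.hasCompactSupport_normed.contDiff_convolution_left _ φ.contDiff_normed
      hg.continuous.locallyIntegrable, lipschitzWith_normed_convolution φ hg, fun x ↦ ?_⟩
  refine φ.dist_normed_convolution_le hg.continuous.aestronglyMeasurable fun y hy ↦ ?_
  calc dist (g y) (g x) ≤ L * dist y x := hg.dist_le_mul y x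
    _ ≤ L * (δ / (L + 1)) := by gcongr; exact (Metric.mem_ball.1 hy).le
    _ ≤ δ := by
      rw [← mul_div_assoc, div_le_iff₀ (by positivity)]
      linarith

end Mollification

section Approximation

variable {V : Type*} [NormedAddCommGroup V] [NormedSpace ℝ V] {K : Set V}

theorem exists_mem_networks_near_of_lipschitzOnWith [FiniteDimensional ℝ V] {σ : c1Functions ℝ}
    (hσ : ¬ IsPolynomialFun σ) (hK : Bornology.IsBounded K) {f : V → ℝ} {L : NNReal}
    (hf : LipschitzOnWith L f K) {ε : ℝ} (hε : 0 < ε) :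
    ∃ h ∈ networks V σ, (∀ x ∈ K, |f x - (h : V → ℝ) x| < ε) ∧
      ∀ x ∈ K, ∀ y ∈ K, |(h : V → ℝ) x - (h : V → ℝ) y| ≤ (L + ε) * ‖x - y‖ := by
  have := FiniteDimensional.proper_real V
  obtain ⟨g, hg, hfg⟩ := hf.extend_real
  obtain ⟨m, hm, hmlip, hmg⟩ := exists_contDiff_lipschitzWith_dist_le hg (half_pos hε)
  obtain ⟨R, hKR⟩ := hK.subset_closedBall 0
  obtain ⟨h, hh, hnear⟩ := exists_mem_networks_near_of_contDiff hσ (isCompact_closedBall 0 R)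
    (convex_closedBall 0 R) hm (show 0 < ε / 3 by positivity)
  refine ⟨h, hh, fun x hx ↦ ?_, fun x hx y hy ↦ ?_⟩
  · calc |f x - (h : V → ℝ) x|
        = |(m - h : V → ℝ) x - (m x - g x)| := by
          rw [hfg hx, Pi.sub_apply]
          ring_nf
      _ ≤ ε / 3 + ε / 2 := (abs_sub _ _).trans (add_le_add (hnear x (hKR hx)).1 (hmg x))
      _ < ε := by linarith
  · calc |(h : V → ℝ) x - (h : V → ℝ) y|
        = |m x - m y - ((m - h : V → ℝ) x - (m - h : V → ℝ) y)| := by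
          simp only [Pi.sub_apply]
          ring_nf
      _ ≤ L * ‖x - y‖ + ε / 3 * ‖x - y‖ :=
          (abs_sub _ _).trans (add_le_add (hmlip.norm_sub_le x y)
            ((hnear x (hKR hx)).2 y (hKR hy)))
      _ ≤ (L + ε) * ‖x - y‖ := by
          rw [← add_mul]
          gcongr
          linarith

lemma exists_fin_sum_smul_eq_of_mem_span_range {R M P ι : Type*} [Semiring R] [AddCommMonoid M]
    [Module R M] [Finite ι] {g : P → M} {h : ι → M}
    (hh : ∀ j, h j ∈ Submodule.span R (range g)) :
    ∃ (k : ℕ) (p : Fin k → P) (C : Matrix ι (Fin k) R), ∀ j, h j = ∑ i, C j i • g (p i) := by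
  classical
  have := Fintype.ofFinite ι
  choose c hc using fun j ↦ Finsupp.mem_span_range_iff_exists_finsupp.1 (hh j)
  let S : Finset P := Finset.univ.biUnion fun j ↦ (c j).support
  let q := S.equivFin.symm
  refine ⟨S.card, fun i ↦ q i, fun j i ↦ c j (q i), fun j ↦ ?_⟩
  rw [q.sum_comp fun p : S ↦ c j p • g p, Finset.sum_coe_sort S fun p ↦ c j p • g p, ← hc j]
  exact Finsupp.sum_of_support_subset _
    (Finset.subset_biUnion_of_mem (fun j ↦ (c j).support) (Finset.mem_univ j)) _ (by simp)

lemma exists_mulVec_eq_of_mem_networks {ι : Type*} [Finite ι] {σ : c1Functions ℝ}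
    {h : ι → c1Functions V} (hh : ∀ j, h j ∈ networks V σ) :
    ∃ (k : ℕ) (A : V →L[ℝ] (Fin k → ℝ)) (b : Fin k → ℝ) (C : Matrix ι (Fin k) ℝ),
      ∀ x j, C.mulVec (fun i ↦ (σ : ℝ → ℝ) ((A x + b) i)) j = (h j : V → ℝ) x := by
  obtain ⟨k, p, C, hC⟩ := exists_fin_sum_smul_eq_of_mem_span_range hh
  refine ⟨k, ContinuousLinearMap.pi fun i ↦ (p i).1, fun i ↦ (p i).2, C, fun x j ↦ ?_⟩
  simp [hC j, neuron, Matrix.mulVec, dotProduct]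

theorem stmt_0_general [FiniteDimensional ℝ V] {ι : Type*} [Fintype ι]
    (hK : Bornology.IsBounded K) {σ : ℝ → ℝ} (hσ : ContDiff ℝ 1 σ) (hσpoly : ¬ IsPolynomialFun σ)
    {f : V → ι → ℝ} {L : ℝ} (hf : ∀ x ∈ K, ∀ y ∈ K, ‖f x - f y‖ ≤ L * ‖x - y‖) {ε : ℝ}
    (hε : 0 < ε) :
    ∃ (k : ℕ) (A : V →L[ℝ] (Fin k → ℝ)) (b : Fin k → ℝ) (C : Matrix ι (Fin k) ℝ),
      (∀ x ∈ K, ‖f x - C.mulVec (fun i ↦ σ ((A x + b) i))‖ < ε) ∧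
      ∀ x ∈ K, ∀ y ∈ K, ‖C.mulVec (fun i ↦ σ ((A x + b) i)) -
        C.mulVec (fun i ↦ σ ((A y + b) i))‖ ≤ (L + ε) * ‖x - y‖ := by
  have hlip (j : ι) : LipschitzOnWith L.toNNReal (fun x ↦ f x j) K :=
    LipschitzOnWith.of_dist_le' fun x hx y hy ↦ by
      simpa only [dist_eq_norm, Pi.sub_apply] using
        (norm_le_pi_norm (f x - f y) j).trans (hf x hx y hy)
  choose h hh hnear hhlip using fun j ↦ exists_mem_networks_near_of_lipschitzOnWith
    (σ := ⟨σ, mem_c1Functions.2 hσ⟩) hσpoly hK (hlip j) hε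
  obtain ⟨k, A, b, C, hC⟩ := exists_mulVec_eq_of_mem_networks hh
  refine ⟨k, A, b, C, fun x hx ↦ (pi_norm_lt_iff hε).2 fun j ↦ ?_, fun x hx y hy ↦ ?_⟩
  · rw [Pi.sub_apply, hC]
    exact hnear j x hx
  · obtain rfl | hxy := eq_or_ne x y
    · simp
    have hL : 0 ≤ L :=
      nonneg_of_mul_nonneg_left ((norm_nonneg _).trans (hf x hx y hy)) (norm_sub_pos_iff.2 hxy)
    refine (pi_norm_le_iff_of_nonneg (by positivity)).2 fun j ↦ ?_
    rw [Pi.sub_apply, hC, hC]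
    simpa only [Real.coe_toNNReal L hL, Real.norm_eq_abs] using hhlip j x hx y hy

end Approximation

/-- Universal approximation of an `L`-Lipschitz (in the sup norm) function on a
compact set by a one-hidden-layer neural network `φ(x) = C·σ(Ax + b)` whose Lipschitz constant
(in the sup norms) is at most `L + ε`.  Here `Fin n → ℝ` and `Fin m → ℝ` carry the sup norm. -/
theorem stmt_0 (n m : ℕ) (K : Set (Fin n → ℝ)) (hK : IsCompact K)
    (σ : ℝ → ℝ) (hσ : ContDiff ℝ 1 σ)
    (hσpoly : ¬ ∃ p : Polynomial ℝ, ∀ t : ℝ, σ t = p.eval t)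
    (f : (Fin n → ℝ) → (Fin m → ℝ)) (L : ℝ)
    (hf : ∀ x ∈ K, ∀ y ∈ K, ‖f x - f y‖ ≤ L * ‖x - y‖)
    (ε : ℝ) (hε : 0 < ε) :
    ∃ (k : ℕ) (A : Matrix (Fin k) (Fin n) ℝ) (b : Fin k → ℝ) (C : Matrix (Fin m) (Fin k) ℝ),
      (∀ x ∈ K, ‖f x - C.mulVec (fun i => σ ((A.mulVec x + b) i))‖ < ε) ∧
      (∀ x ∈ K, ∀ y ∈ K,
        ‖C.mulVec (fun i => σ ((A.mulVec x + b) i)) -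
            C.mulVec (fun i => σ ((A.mulVec y + b) i))‖ ≤ (L + ε) * ‖x - y‖) := by
  obtain ⟨k, A, b, C, hnear, hlip⟩ := stmt_0_general hK.isBounded hσ hσpoly hf hε
  exact ⟨k, LinearMap.toMatrix' A, b, C, by simpa using hnear, by simpa using hlip⟩
end

section
/- Let K ⊂ ℝⁿ be a compact set, let σ : ℝ → ℝ be continuously differentiable and not a polynomial, and let f : ℝⁿ → ℝ^m be continuously differentiable. Then for every ε > 0 there exist k ∈ ℕ, A ∈ ℝ^{k×n}, b ∈ ℝ^k, C ∈ ℝ^{m×k} such that the one-hidden-layer neural network φ(x) = C·σ(Ax + b) satisfies simultaneously sup_{x ∈ K} ‖f(x) − φ(x)‖ < ε and sup_{x ∈ K} ‖∂f/∂x_i(x) − ∂φ/∂x_i(x)‖ < ε for every i = 1, …, n. -/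
/-!
Density in `C⁰`: the closed span of the functions `σ ∘ v`, for `v` affine, contains `g ∘ v` for
every mollification `g` of `σ`, and also the derivatives in the parameters of `v`, which are the
functions `p * g⁽ᵏ⁾ ∘ v` with `p` a product of `k` affine functions. As `σ` is not a polynomial,
for each `k` some `g⁽ᵏ⁾` has a nonzero value. Taking `v` constant there, every such `p` lies in
the span, and Stone–Weierstrass applies.

Density in `C¹`: one may assume that `f` has compact support. For a ridge function `h`, the
convolution of `h` and `f` is an integral of translates of `h`, which are again ridge functions,
with coefficients `f y`. Integrating by parts, this is true for derivatives too, so `h ⋆ f` is a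
`C¹` limit of networks. It is also an integral of translates of `f` with coefficients `h t`, and
so depends continuously in `C¹` on `h` in the `C⁰` topology. Density in `C⁰` therefore allows
every continuous `h`, in particular bump functions tending to the Dirac mass, for which `h ⋆ f`
tends to `f` in `C¹`.
-/

open MeasureTheory Filter Topology Function
open scoped ContDiff Convolution

section ClosedSubspace

variable {B : Type*} [NormedAddCommGroup B] [NormedSpace ℝ B] {S : Submodule ℝ B}

theorem integral_mem_of_isClosed_s2 [CompleteSpace B] {Y : Type*} [MeasurableSpace Y] {μ : Measure Y}
    (hS : IsClosed (S : Set B)) {G : Y → B} (hG : ∀ᵐ y ∂μ, G y ∈ S) : ∫ y, G y ∂μ ∈ S := by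
  by_cases hint : Integrable G μ
  · rw [← S.ker_mkQ, LinearMap.mem_ker]
    calc S.mkQL (∫ y, G y ∂μ) = ∫ y, S.mkQL (G y) ∂μ :=
          (S.mkQL.integral_comp_comm hint).symm
      _ = 0 := integral_eq_zero_of_ae <| hG.mono fun y hy ↦ (Submodule.Quotient.mk_eq_zero S).2 hy
  · rw [integral_undef hint]
    exact S.zero_mem

theorem mem_of_hasDerivAt_of_isClosed_s2 (hS : IsClosed (S : Set B)) {F : ℝ → B} {F' : B} {t : ℝ}
    (hF : HasDerivAt F F' t) (hmem : ∀ s, F s ∈ S) : F' ∈ S := by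
  have hspan : Submodule.span ℝ (F '' Set.univ) ≤ S :=
    Submodule.span_le.2 (Set.image_subset_iff.2 fun s _ ↦ hmem s)
  exact closure_minimal hspan hS
    (range_deriv_subset_closure_span_image F dense_univ ⟨t, hF.deriv⟩)

end ClosedSubspace

section ContinuousMapDeriv

variable {X : Type*} [TopologicalSpace X] [CompactSpace X]

theorem hasDerivAt_continuousMap_of_apply {V : Type*} [NormedAddCommGroup V] [NormedSpace ℝ V]
    [CompleteSpace V] {F F' : ℝ → C(X, V)} (hF' : Continuous F')
    (hF : ∀ t x, HasDerivAt (fun s ↦ F s x) (F' t x) t) (t : ℝ) : HasDerivAt F (F' t) t := by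
  have hFTC : F = fun s ↦ F t + ∫ r in t..s, F' r := by
    funext s
    ext x
    have heval : (∫ r in t..s, F' r) x = ∫ r in t..s, F' r x :=
      ((ContinuousMap.evalCLM ℝ x : C(X, V) →L[ℝ] V).intervalIntegral_comp_comm
        (hF'.intervalIntegrable t s)).symm
    rw [ContinuousMap.add_apply, heval, intervalIntegral.integral_eq_sub_of_hasDerivAt
      (fun r _ ↦ hF r x) (Continuous.intervalIntegrable (by fun_prop) t s), add_sub_cancel]
  rw [hFTC]
  exact (hF'.integral_hasStrictDerivAt t t).hasDerivAt.const_add _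

theorem hasDerivAt_comp_add_smul {g g' : C(ℝ, ℝ)} (hg : ∀ s, HasDerivAt g (g' s) s)
    (u a : C(X, ℝ)) (t : ℝ) :
    HasDerivAt (fun s : ℝ ↦ g.comp (u + s • a)) (g'.comp (u + t • a) * a) t := by
  refine hasDerivAt_continuousMap_of_apply (F' := fun s ↦ g'.comp (u + s • a) * a)
    (by fun_prop) (fun s x ↦ ?_) t
  have hline : HasDerivAt (fun r ↦ u x + r * a x) (a x) s := by
    simpa using ((hasDerivAt_id s).mul_const (a x)).const_add (u x)
  exact (hg _).comp s hline

end ContinuousMapDeriv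

section Polynomial

/-- Polynomial functions of degree less than `k`, as a subspace of `ℝ → ℝ` with the topology of
pointwise convergence. -/
noncomputable def polynomialFunctionsLT (k : ℕ) : Submodule ℝ (ℝ → ℝ) :=
  (Polynomial.degreeLT ℝ k).map (LinearMap.pi Polynomial.leval)

theorem exists_polynomial_of_mem_polynomialFunctionsLT {k : ℕ} {g : ℝ → ℝ}
    (hg : g ∈ polynomialFunctionsLT k) : ∃ p : Polynomial ℝ, ∀ t, g t = p.eval t := by
  obtain ⟨p, -, rfl⟩ := hg
  exact ⟨p, fun t ↦ rfl⟩

theorem isClosed_polynomialFunctionsLT (k : ℕ) :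
    IsClosed (polynomialFunctionsLT k : Set (ℝ → ℝ)) := by
  have : FiniteDimensional ℝ (Polynomial.degreeLT ℝ k) :=
    (Polynomial.degreeLTEquiv ℝ k).symm.finiteDimensional
  have : FiniteDimensional ℝ (polynomialFunctionsLT k) := by
    unfold polynomialFunctionsLT
    infer_instance
  exact Submodule.closed_of_finiteDimensional _

theorem polynomialFunctionsLT_mono : Monotone polynomialFunctionsLT :=
  fun _ _ h ↦ Submodule.map_mono (Polynomial.degreeLT_mono h)

theorem const_mul_pow_mem_polynomialFunctionsLT (k : ℕ) (c : ℝ) :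
    (fun t ↦ c * t ^ k) ∈ polynomialFunctionsLT (k + 1) := by
  refine ⟨Polynomial.C c * Polynomial.X ^ k, ?_, by ext t; simp⟩
  rw [SetLike.mem_coe, Polynomial.mem_degreeLT]
  exact (Polynomial.degree_C_mul_X_pow_le _ _).trans_lt (by exact_mod_cast Nat.lt_succ_self k)

theorem mem_polynomialFunctionsLT_of_iteratedDeriv_eq_zero {k : ℕ} {g : ℝ → ℝ}
    (hg : ContDiff ℝ k g) (hzero : ∀ t, iteratedDeriv k g t = 0) :
    g ∈ polynomialFunctionsLT k := by
  induction k generalizing g with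
  | zero =>
    have : g = 0 := funext fun t ↦ by simpa using hzero t
    exact this ▸ Submodule.zero_mem _
  | succ k ih =>
    have hgk : ContDiff ℝ k g := hg.of_le (by exact_mod_cast Nat.le_succ k)
    have hconst : ∀ t, iteratedDeriv k g t = iteratedDeriv k g 0 := fun t ↦
      is_const_of_deriv_eq_zero
        (hg.differentiable_iteratedDeriv k (by exact_mod_cast Nat.lt_succ_self k))
        (fun s ↦ by rw [← iteratedDeriv_succ, hzero]) t 0
    set c : ℝ := iteratedDeriv k g 0 / k.factorial with hc
    have hlow : (fun t ↦ g t - c * t ^ k) ∈ polynomialFunctionsLT k := by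
      refine ih (by fun_prop) fun t ↦ ?_
      rw [iteratedDeriv_fun_sub (by fun_prop) (by fun_prop), iteratedDeriv_const_mul_field,
        iteratedDeriv_pow, hconst, hc, Nat.descFactorial_self, Nat.sub_self, pow_zero, mul_one,
        div_mul_cancel₀ _ (by positivity), sub_self]
    have hsplit : g = (fun t ↦ g t - c * t ^ k) + fun t ↦ c * t ^ k := by
      ext t
      simp
    rw [hsplit]
    exact Submodule.add_mem _ (polynomialFunctionsLT_mono k.le_succ hlow)
      (const_mul_pow_mem_polynomialFunctionsLT k c)

end Polynomial

section Mollification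

theorem exists_contDiffBump_tendsto_rOut_zero {E : Type*} [NormedAddCommGroup E] :
    ∃ φ : ℕ → ContDiffBump (0 : E), Tendsto (fun j ↦ (φ j).rOut) atTop (𝓝 0) := by
  refine ⟨fun j ↦ ⟨1 / ((j : ℝ) + 1 + 1), 1 / ((j : ℝ) + 1), by positivity, ?_⟩,
    tendsto_one_div_add_atTop_nhds_zero_nat⟩
  exact one_div_lt_one_div_of_lt (by positivity) (lt_add_one _)

theorem exists_iteratedDeriv_convolution_ne_zero {σ : ℝ → ℝ} (hσ : Continuous σ)
    (hpoly : ¬ ∃ p : Polynomial ℝ, ∀ t, σ t = p.eval t) (k : ℕ) :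
    ∃ ψ : ℝ → ℝ, ContDiff ℝ ∞ ψ ∧ HasCompactSupport ψ ∧
      ∃ s, iteratedDeriv k (ψ ⋆[ContinuousLinearMap.lsmul ℝ ℝ, volume] σ) s ≠ 0 := by
  contrapose! hpoly
  obtain ⟨φ, hφ⟩ := exists_contDiffBump_tendsto_rOut_zero (E := ℝ)
  have hmollified : ∀ j, (φ j).normed volume ⋆[ContinuousLinearMap.lsmul ℝ ℝ, volume] σ ∈
      polynomialFunctionsLT k := fun j ↦
    mem_polynomialFunctionsLT_of_iteratedDeriv_eq_zero
      ((φ j).hasCompactSupport_normed.contDiff_convolution_left _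
        (φ j).contDiff_normed hσ.locallyIntegrable)
      (hpoly _ (φ j).contDiff_normed (φ j).hasCompactSupport_normed)
  exact exists_polynomial_of_mem_polynomialFunctionsLT <|
    (isClosed_polynomialFunctionsLT k).mem_of_tendsto
      (tendsto_pi_nhds.2 (ContDiffBump.convolution_tendsto_right_of_continuous hφ hσ))
      (Eventually.of_forall hmollified)

end Mollification

section Density

variable {X : Type*} [TopologicalSpace X]

section Compact

variable [CompactSpace X] {S V : Submodule ℝ C(X, ℝ)}

theorem comp_mem_of_eq_convolution (hS : IsClosed (S : Set C(X, ℝ))) {ψ : ℝ → ℝ}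
    (hψ : Continuous ψ) (hψc : HasCompactSupport ψ) {σ g : C(ℝ, ℝ)}
    (hg : ⇑g = ψ ⋆[ContinuousLinearMap.lsmul ℝ ℝ, volume] σ) {v : C(X, ℝ)}
    (hmem : ∀ t, σ.comp (v - .const X t) ∈ S) : g.comp v ∈ S := by
  have hcont : Continuous fun t ↦ ψ t • σ.comp (v - .const X t) := by fun_prop
  have hsupp : HasCompactSupport fun t ↦ ψ t • σ.comp (v - .const X t) := hψc.smul_right
  have hint : g.comp v = ∫ t, ψ t • σ.comp (v - .const X t) := by
    ext x
    rw [ContinuousMap.integral_apply (hcont.integrable_of_hasCompactSupport hsupp),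
      ContinuousMap.comp_apply, hg]
    rfl
  rw [hint]
  exact integral_mem_of_isClosed_s2 hS (ae_of_all _ fun t ↦ S.smul_mem _ (hmem t))

theorem mul_comp_mem_of_mem_pow (hS : IsClosed (S : Set C(X, ℝ))) {g : ℕ → C(ℝ, ℝ)}
    (hg : ∀ k s, HasDerivAt (g k) (g (k + 1) s) s) (hmem : ∀ v ∈ V, (g 0).comp v ∈ S) {k : ℕ}
    {p : C(X, ℝ)} (hp : p ∈ V ^ k) : ∀ v ∈ V, p * (g k).comp v ∈ S := by
  induction hp using Submodule.pow_induction_on_left' with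
  | algebraMap r =>
    intro v hv
    rw [← Algebra.smul_def]
    exact S.smul_mem r (hmem v hv)
  | add p q k _ _ hp hq =>
    intro v hv
    rw [add_mul]
    exact S.add_mem (hp v hv) (hq v hv)
  | mem_mul a ha k p _ hp =>
    intro v hv
    -- Moving `v` in the direction `a` stays in `V`, and the derivative brings down a factor `a`.
    have hderiv : HasDerivAt (fun s : ℝ ↦ p * (g k).comp (v + s • a))
        (p * ((g (k + 1)).comp (v + (0 : ℝ) • a) * a)) 0 :=
      (hasDerivAt_comp_add_smul (hg k) v a 0).const_mul p
    have := mem_of_hasDerivAt_of_isClosed_s2 hS hderiv fun s ↦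
      hp _ (V.add_mem hv (V.smul_mem s ha))
    rw [zero_smul, add_zero] at this
    convert this using 1
    ring

theorem pow_le_of_comp_mem (hS : IsClosed (S : Set C(X, ℝ))) (hone : 1 ∈ V) {σ : C(ℝ, ℝ)}
    (hpoly : ¬ ∃ p : Polynomial ℝ, ∀ t, σ t = p.eval t) (hmem : ∀ v ∈ V, σ.comp v ∈ S) (k : ℕ) :
    V ^ k ≤ S := by
  have hconst : ∀ t, ContinuousMap.const X t ∈ V := fun t ↦ by
    have hsmul : ContinuousMap.const X t = t • (1 : C(X, ℝ)) := by
      ext x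
      simp
    exact hsmul ▸ V.smul_mem t hone
  obtain ⟨ψ, hψ, hψc, s, hs⟩ := exists_iteratedDeriv_convolution_ne_zero σ.continuous hpoly k
  have hsmooth : ContDiff ℝ ∞ (ψ ⋆[ContinuousLinearMap.lsmul ℝ ℝ, volume] σ) :=
    hψc.contDiff_convolution_left _ hψ σ.continuous.locallyIntegrable
  let g (j : ℕ) : C(ℝ, ℝ) := ⟨_, hsmooth.continuous_iteratedDeriv j (by exact_mod_cast le_top)⟩
  have hg : ∀ j t, HasDerivAt (g j) (g (j + 1) t) t := fun j t ↦ by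
    simpa [g, iteratedDeriv_succ] using
      (hsmooth.differentiable_iteratedDeriv j (by exact_mod_cast ENat.natCast_lt_top j)
        t).hasDerivAt
  have hg0 : ∀ v ∈ V, (g 0).comp v ∈ S := fun v hv ↦
    comp_mem_of_eq_convolution hS hψ.continuous hψc iteratedDeriv_zero fun t ↦
      hmem _ (V.sub_mem hv (hconst t))
  intro p hp
  have hscaled : g k s • p ∈ S := by
    convert mul_comp_mem_of_mem_pow hS hg hg0 hp _ (hconst s) using 1
    ext x
    simp [mul_comm]
  exact (S.smul_mem_iff hs).1 hscaled

theorem exists_mem_pow_of_mem_closure {R A : Type*} [CommSemiring R] [Semiring A] [Algebra R A]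
    {M : Submodule R A} {p : A} (hp : p ∈ Submonoid.closure (M : Set A)) :
    ∃ k : ℕ, p ∈ M ^ k := by
  induction hp using Submonoid.closure_induction with
  | mem p hp => exact ⟨1, by rwa [pow_one]⟩
  | one => exact ⟨0, by rw [pow_zero]; exact Submodule.one_le.1 le_rfl⟩
  | mul p q _ _ hp hq =>
    obtain ⟨i, hi⟩ := hp
    obtain ⟨j, hj⟩ := hq
    exact ⟨i + j, by rw [pow_add]; exact Submodule.mul_mem_mul hi hj⟩

theorem eq_top_of_comp_mem (hS : IsClosed (S : Set C(X, ℝ))) (hone : 1 ∈ V)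
    (hsep : ((fun v : C(X, ℝ) ↦ (v : X → ℝ)) '' V).SeparatesPoints) {σ : C(ℝ, ℝ)}
    (hpoly : ¬ ∃ p : Polynomial ℝ, ∀ t, σ t = p.eval t) (hmem : ∀ v ∈ V, σ.comp v ∈ S) :
    S = ⊤ := by
  have hadjoin : (Algebra.adjoin ℝ (V : Set C(X, ℝ))).toSubmodule ≤ S := by
    rw [Algebra.adjoin_eq_span, Submodule.span_le]
    intro p hp
    obtain ⟨k, hk⟩ := exists_mem_pow_of_mem_closure hp
    exact pow_le_of_comp_mem hS hone hpoly hmem k hk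
  have hdense := ContinuousMap.subalgebra_topologicalClosure_eq_top_of_separatesPoints
    (Algebra.adjoin ℝ (V : Set C(X, ℝ))) fun x y hxy ↦
      let ⟨w, hw, hne⟩ := hsep hxy
      ⟨w, Set.image_mono Algebra.subset_adjoin hw, hne⟩
  refine eq_top_iff.2 fun u _ ↦ closure_minimal hadjoin hS ?_
  change u ∈ (Algebra.adjoin ℝ (V : Set C(X, ℝ))).topologicalClosure
  rw [hdense]
  trivial

end Compact

theorem dense_of_forall_isCompact_dense_restrict {Y : Type*} [PseudoMetricSpace Y]
    {T : Set C(X, Y)}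
    (hT : ∀ K : Set X, IsCompact K → Dense ((fun u : C(X, Y) ↦ u.restrict K) '' T)) :
    Dense T := by
  intro u
  rw [mem_closure_iff_nhds_basis
    (nhds_basis_uniformity' Metric.uniformity_basis_dist.compactConvergenceUniformity)]
  rintro ⟨K, ε⟩ ⟨hK, hε⟩
  have : CompactSpace K := isCompact_iff_compactSpace.1 hK
  obtain ⟨_, ⟨w, hw, rfl⟩, hdist⟩ := (hT K hK).exists_dist_lt (u.restrict K) hε
  exact ⟨w, hw, fun x hx ↦ (ContinuousMap.dist_apply_le_dist (⟨x, hx⟩ : K)).trans_lt hdist⟩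

theorem dense_span_comp {V : Submodule ℝ C(X, ℝ)} (hone : 1 ∈ V)
    (hsep : ((fun v : C(X, ℝ) ↦ (v : X → ℝ)) '' V).SeparatesPoints) {σ : C(ℝ, ℝ)}
    (hpoly : ¬ ∃ p : Polynomial ℝ, ∀ t, σ t = p.eval t) :
    Dense (Submodule.span ℝ (σ.comp '' (V : Set C(X, ℝ))) : Set C(X, ℝ)) := by
  refine dense_of_forall_isCompact_dense_restrict fun K hK ↦ ?_
  have : CompactSpace K := isCompact_iff_compactSpace.1 hK
  let res : C(X, ℝ) →ₗ[ℝ] C(K, ℝ) :=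
    (ContinuousMap.compRightAlgHom ℝ ℝ ⟨((↑) : K → X), continuous_subtype_val⟩).toLinearMap
  let S := ((Submodule.span ℝ (σ.comp '' (V : Set C(X, ℝ)))).map res).topologicalClosure
  have hsepK : ((fun v : C(K, ℝ) ↦ (v : K → ℝ)) '' V.map res).SeparatesPoints := by
    intro x y hxy
    obtain ⟨_, ⟨v, hv, rfl⟩, hne⟩ := hsep (Subtype.coe_injective.ne hxy)
    exact ⟨_, ⟨res v, ⟨v, hv, rfl⟩, rfl⟩, hne⟩
  have htop : S = ⊤ := by
    refine eq_top_of_comp_mem (V := V.map res) (Submodule.isClosed_topologicalClosure _)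
      ⟨1, hone, rfl⟩ hsepK hpoly ?_
    rintro _ ⟨v, hv, rfl⟩
    exact Submodule.le_topologicalClosure _ ⟨σ.comp v, Submodule.subset_span ⟨v, hv, rfl⟩, rfl⟩
  exact Submodule.dense_iff_topologicalClosure_eq_top.2 htop

end Density

section Integration

variable {E F B : Type*} [NormedAddCommGroup E] [NormedSpace ℝ E] [FiniteDimensional ℝ E]
  [MeasurableSpace E] [BorelSpace E] {μ : Measure E} [μ.IsAddHaarMeasure]
  [NormedAddCommGroup F] [NormedSpace ℝ F] [NormedAddCommGroup B] [NormedSpace ℝ B]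

theorem integral_smul_fderiv_sub_eq_integral_fderiv_sub_smul {h : E → ℝ} {f : E → F}
    (hh : ContDiff ℝ 1 h) (hf : ContDiff ℝ 1 f) (hfc : HasCompactSupport f) (x v : E) :
    ∫ t, h t • fderiv ℝ f (x - t) v ∂μ = ∫ y, fderiv ℝ h (x - y) v • f y ∂μ := by
  have : Continuous (fderiv ℝ h) := hh.continuous_fderiv one_ne_zero
  have : Continuous (fderiv ℝ f) := hf.continuous_fderiv one_ne_zero
  have hreflect : ∀ y, HasFDerivAt (fun z ↦ h (x - z)) (-fderiv ℝ h (x - y)) y := fun y ↦ by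
    simpa [comp_def] using (hh.differentiable one_ne_zero (x - y)).hasFDerivAt.comp y
      ((hasFDerivAt_id y).const_sub x)
  have hfderiv : ∀ y, fderiv ℝ (fun z ↦ h (x - z)) y v = -fderiv ℝ h (x - y) v := fun y ↦ by
    rw [(hreflect y).fderiv, neg_apply]
  calc ∫ t, h t • fderiv ℝ f (x - t) v ∂μ
      = ∫ y, h (x - y) • fderiv ℝ f y v ∂μ := by
        rw [← integral_sub_left_eq_self _ μ x]
        simp only [sub_sub_cancel]
    _ = -∫ y, fderiv ℝ (fun z ↦ h (x - z)) y v • f y ∂μ := by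
        refine integral_smul_fderiv_eq_neg_fderiv_smul_of_integrable ?_ ?_ ?_
          (fun y _ ↦ (hreflect y).differentiableAt) (fun y _ ↦ hf.differentiable one_ne_zero y)
        · simp only [hfderiv]
          exact Continuous.integrable_of_hasCompactSupport (by fun_prop) hfc.smul_left
        · exact Continuous.integrable_of_hasCompactSupport (by fun_prop)
            (hfc.fderiv_apply ℝ v).smul_left
        · exact Continuous.integrable_of_hasCompactSupport (by fun_prop) hfc.smul_left
    _ = ∫ y, fderiv ℝ h (x - y) v • f y ∂μ := by
        simp only [hfderiv, neg_smul, integral_neg, neg_neg]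

theorem continuous_integral_smul {G : E → B} (hG : Continuous G) (hGc : HasCompactSupport G) :
    Continuous fun u : C(E, ℝ) ↦ ∫ t, u t • G t ∂μ := by
  rw [← continuousOn_univ]
  refine continuousOn_integral_of_compact_support hGc (Continuous.continuousOn ?_) fun u t _ ht ↦ ?_
  · unfold uncurry
    fun_prop
  · simp [image_eq_zero_of_notMem_tsupport ht]

theorem integral_smul_mem_of_dense_span {S : Submodule ℝ B} (hS : IsClosed (S : Set B))
    {G : E → B} (hG : Continuous G) (hGc : HasCompactSupport G) {T : Set C(E, ℝ)}
    (hT : Dense (Submodule.span ℝ T : Set C(E, ℝ))) (hmem : ∀ u ∈ T, ∫ t, u t • G t ∂μ ∈ S)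
    (u : C(E, ℝ)) : ∫ t, u t • G t ∂μ ∈ S := by
  have hint : ∀ w : C(E, ℝ), Integrable (fun t ↦ w t • G t) μ := fun w ↦
    Continuous.integrable_of_hasCompactSupport (by fun_prop) hGc.smul_left
  let Λ : C(E, ℝ) →ₗ[ℝ] B :=
    { toFun := fun w ↦ ∫ t, w t • G t ∂μ
      map_add' := fun w₁ w₂ ↦ by
        simp only [ContinuousMap.add_apply, add_smul, integral_add (hint w₁) (hint w₂)]
      map_smul' := fun c w ↦ by
        simp only [ContinuousMap.smul_apply, smul_assoc, integral_smul, RingHom.id_apply] }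
  have hspan : Submodule.span ℝ T ≤ S.comap Λ := Submodule.span_le.2 hmem
  exact closure_minimal hspan (hS.preimage (continuous_integral_smul hG hGc)) (hT u)

theorem apply_zero_mem_of_forall_integral_smul_mem [CompleteSpace B] {S : Submodule ℝ B}
    (hS : IsClosed (S : Set B)) {G : E → B} (hG : Continuous G)
    (hmem : ∀ u : C(E, ℝ), ∫ t, u t • G t ∂μ ∈ S) : G 0 ∈ S := by
  obtain ⟨φ, hφ⟩ := exists_contDiffBump_tendsto_rOut_zero (E := E)
  have htendsto := ContDiffBump.convolution_tendsto_right_of_continuous (μ := μ) hφ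
    (hG.comp continuous_neg) 0
  rw [Function.comp_apply, neg_zero] at htendsto
  refine hS.mem_of_tendsto htendsto (Eventually.of_forall fun j ↦ ?_)
  simpa [convolution_def] using hmem ⟨(φ j).normed μ, (φ j).continuous_normed⟩

end Integration

section TangentMap

variable {E F : Type*} [NormedAddCommGroup E] [NormedSpace ℝ E]
  [NormedAddCommGroup F] [NormedSpace ℝ F]

/-- The vector space of continuously differentiable functions `E → F`. -/
def C1Functions (E F : Type*) [NormedAddCommGroup E] [NormedSpace ℝ E] [NormedAddCommGroup F]
    [NormedSpace ℝ F] : Submodule ℝ (E → F) where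
  carrier := {f | ContDiff ℝ 1 f}
  add_mem' := by
    intro f g (hf : ContDiff ℝ 1 f) (hg : ContDiff ℝ 1 g)
    exact hf.add hg
  zero_mem' := (contDiff_const : ContDiff ℝ 1 fun _ ↦ (0 : F))
  smul_mem' := by
    intro c f (hf : ContDiff ℝ 1 f)
    exact hf.const_smul c

namespace C1Functions

instance : CoeFun (C1Functions E F) fun _ ↦ E → F := ⟨Subtype.val⟩

theorem contDiff (f : C1Functions E F) : ContDiff ℝ 1 f := f.2

theorem continuous (f : C1Functions E F) : Continuous f := (contDiff f).continuous

theorem differentiable (f : C1Functions E F) : Differentiable ℝ f :=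
  (contDiff f).differentiable one_ne_zero

theorem continuous_fderiv (f : C1Functions E F) : Continuous (fderiv ℝ f) :=
  (contDiff f).continuous_fderiv one_ne_zero

/-- The tangent map `(x, v) ↦ (f x, Df x v)` restricted to a set `L` of tangent vectors. For
`L = K × (unit ball)`, uniform closeness of tangent maps is closeness in `C¹` on `K`. -/
noncomputable def tangentMapOn (L : Set (E × E)) : C1Functions E F →ₗ[ℝ] C(L, F × F) where
  toFun f := ⟨fun p ↦ (f p.1.1, fderiv ℝ f p.1.1 p.1.2), by
    have : Continuous f := continuous f
    have : Continuous (fderiv ℝ f) := continuous_fderiv f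
    fun_prop⟩
  map_add' f g := by
    ext p : 1
    exact Prod.ext rfl
      congr($(fderiv_add (differentiable f p.1.1) (differentiable g p.1.1)) p.1.2)
  map_smul' c f := by
    ext p : 1
    exact Prod.ext rfl congr($(fderiv_const_smul (differentiable f p.1.1) c) p.1.2)

/-- The translate `x ↦ f (x - t)`. -/
def translate (f : C1Functions E F) (t : E) : C1Functions E F :=
  ⟨fun x ↦ f (x - t), (contDiff f).comp (contDiff_id.sub contDiff_const)⟩

/-- The vector-valued function `x ↦ h x • v` obtained from a scalar function `h`. -/
def smulVector (h : C1Functions E ℝ) (v : F) : C1Functions E F :=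
  ⟨fun x ↦ h x • v, (contDiff h).smul contDiff_const⟩

variable {L : Set (E × E)}

theorem tangentMapOn_translate_apply (f : C1Functions E F) (t : E) (p : L) :
    tangentMapOn L (translate f t) p = (f (p.1.1 - t), fderiv ℝ f (p.1.1 - t) p.1.2) :=
  Prod.ext rfl congr($(fderiv_comp_sub t) p.1.2)

theorem tangentMapOn_smulVector_translate_apply (h : C1Functions E ℝ) (y : E) (v : F) (p : L) :
    tangentMapOn L (smulVector (translate h y) v) p =
      (h (p.1.1 - y) • v, fderiv ℝ h (p.1.1 - y) p.1.2 • v) := by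
  refine Prod.ext rfl ?_
  change fderiv ℝ (fun x ↦ translate h y x • v) p.1.1 p.1.2 = _
  rw [fderiv_smul_const (differentiable _ _), ← fderiv_comp_sub y]
  rfl

theorem continuous_tangentMapOn_translate (f : C1Functions E F) :
    Continuous fun t ↦ tangentMapOn L (translate f t) := by
  have : Continuous f := continuous f
  have : Continuous (fderiv ℝ f) := continuous_fderiv f
  refine ContinuousMap.continuous_of_continuous_uncurry _ ?_
  simp only [uncurry_def, tangentMapOn_translate_apply]
  fun_prop

theorem continuous_tangentMapOn_smulVector_translate (h : C1Functions E ℝ)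
    (f : C1Functions E F) :
    Continuous fun y ↦ tangentMapOn L (smulVector (translate h y) (f y)) := by
  have : Continuous f := continuous f
  have : Continuous h := continuous h
  have : Continuous (fderiv ℝ h) := continuous_fderiv h
  refine ContinuousMap.continuous_of_continuous_uncurry _ ?_
  simp only [uncurry_def, tangentMapOn_smulVector_translate_apply]
  fun_prop

theorem hasCompactSupport_tangentMapOn_translate [CompactSpace L] {f : C1Functions E F}
    (hf : HasCompactSupport f) : HasCompactSupport fun t ↦ tangentMapOn L (translate f t) := by
  have hL : IsCompact L := isCompact_iff_compactSpace.2 ‹_›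
  refine HasCompactSupport.intro (((hL.image continuous_fst).prod hf).image continuous_sub)
    fun t ht ↦ ?_
  ext p : 1
  have hp : p.1.1 - t ∉ tsupport f := fun hp ↦
    ht ⟨(p.1.1, p.1.1 - t), ⟨⟨p.1, p.2, rfl⟩, hp⟩, sub_sub_cancel _ _⟩
  have hderiv : fderiv ℝ f (p.1.1 - t) = 0 :=
    image_eq_zero_of_notMem_tsupport fun hp' ↦ hp (tsupport_fderiv_subset ℝ hp')
  rw [tangentMapOn_translate_apply, image_eq_zero_of_notMem_tsupport hp, hderiv]
  rfl

theorem hasCompactSupport_tangentMapOn_smulVector_translate (h : C1Functions E ℝ)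
    {f : C1Functions E F} (hf : HasCompactSupport f) :
    HasCompactSupport fun y ↦ tangentMapOn L (smulVector (translate h y) (f y)) := by
  refine hf.mono fun y hy hfy ↦ hy ?_
  ext p : 1
  simp [tangentMapOn_smulVector_translate_apply, hfy]

-- Both sides are the tangent map of the convolution of `h` and `f`; the derivative falls on `f` on
-- the left and on `h` on the right.
theorem integral_smul_tangentMapOn_translate [FiniteDimensional ℝ E] [MeasurableSpace E]
    [BorelSpace E] {μ : Measure E} [μ.IsAddHaarMeasure] [CompleteSpace F] [CompactSpace L]
    (h : C1Functions E ℝ) {f : C1Functions E F} (hf : HasCompactSupport f) :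
    ∫ t, h t • tangentMapOn L (translate f t) ∂μ =
      ∫ y, tangentMapOn L (smulVector (translate h y) (f y)) ∂μ := by
  have hleft : Integrable (fun t ↦ h t • tangentMapOn L (translate f t)) μ :=
    ((continuous h).smul (continuous_tangentMapOn_translate f)).integrable_of_hasCompactSupport
      ((hasCompactSupport_tangentMapOn_translate hf).smul_left (f := h))
  have hright : Integrable (fun y ↦ tangentMapOn L (smulVector (translate h y) (f y))) μ :=
    (continuous_tangentMapOn_smulVector_translate h f).integrable_of_hasCompactSupport
      (hasCompactSupport_tangentMapOn_smulVector_translate h hf)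
  ext p : 1
  have hleftp : Integrable (fun t ↦ (h t • tangentMapOn L (translate f t)) p) μ :=
    (ContinuousMap.evalCLM ℝ p).integrable_comp hleft
  have hrightp : Integrable (fun y ↦ tangentMapOn L (smulVector (translate h y) (f y)) p) μ :=
    (ContinuousMap.evalCLM ℝ p).integrable_comp hright
  rw [ContinuousMap.integral_apply hleft, ContinuousMap.integral_apply hright]
  refine Prod.ext ?_ ?_
  · rw [fst_integral hleftp, fst_integral hrightp, ← integral_sub_left_eq_self _ μ p.1.1]
    simp [tangentMapOn_translate_apply, tangentMapOn_smulVector_translate_apply]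
  · rw [snd_integral hleftp, snd_integral hrightp]
    simpa [tangentMapOn_translate_apply, tangentMapOn_smulVector_translate_apply] using
      integral_smul_fderiv_sub_eq_integral_fderiv_sub_smul (contDiff h) (contDiff f) hf p.1.1 p.1.2

theorem exists_hasCompactSupport_tangentMapOn_eq [FiniteDimensional ℝ E] [CompactSpace L]
    (f : C1Functions E F) :
    ∃ g : C1Functions E F, HasCompactSupport g ∧ tangentMapOn L g = tangentMapOn L f := by
  have hL : IsCompact L := isCompact_iff_compactSpace.2 ‹_›
  obtain ⟨R, hR, hLR⟩ := (hL.image continuous_fst).isBounded.subset_ball_lt 0 0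
  let χ : ContDiffBump (0 : E) := ⟨R, R + 1, hR, lt_add_one R⟩
  refine ⟨⟨fun x ↦ χ x • f x, χ.contDiff.smul (contDiff f)⟩, χ.hasCompactSupport.smul_right, ?_⟩
  ext p : 1
  have hloc : (fun y ↦ χ y • f y) =ᶠ[𝓝 p.1.1] f := by
    filter_upwards [Metric.isOpen_ball.mem_nhds (hLR ⟨p.1, p.2, rfl⟩)] with y hy
    rw [χ.one_of_mem_closedBall (Metric.ball_subset_closedBall hy), one_smul]
  exact Prod.ext hloc.eq_of_nhds congr($(hloc.fderiv_eq) p.1.2)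

end C1Functions

end TangentMap

section Networks

variable {E F : Type*} [NormedAddCommGroup E] [NormedSpace ℝ E]
  [NormedAddCommGroup F] [NormedSpace ℝ F]

/-- The continuous affine functions `x ↦ ℓ x + b` on `E`. -/
def affineFunctions (E : Type*) [NormedAddCommGroup E] [NormedSpace ℝ E] :
    Submodule ℝ C(E, ℝ) where
  carrier := {u | ∃ (ℓ : StrongDual ℝ E) (b : ℝ), ∀ x, u x = ℓ x + b}
  add_mem' := by
    rintro u w ⟨ℓ, b, hu⟩ ⟨ℓ', b', hw⟩
    exact ⟨ℓ + ℓ', b + b', fun x ↦ by simp [hu, hw, add_add_add_comm]⟩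
  zero_mem' := ⟨0, 0, fun x ↦ by simp⟩
  smul_mem' := by
    rintro c u ⟨ℓ, b, hu⟩
    exact ⟨c • ℓ, c * b, fun x ↦ by simp [hu, mul_add]⟩

theorem one_mem_affineFunctions : 1 ∈ affineFunctions E := ⟨0, 1, fun x ↦ by simp⟩

theorem separatesPoints_affineFunctions :
    ((fun v : C(E, ℝ) ↦ (v : E → ℝ)) '' affineFunctions E).SeparatesPoints := by
  intro x y hxy
  obtain ⟨ℓ, hℓ⟩ := SeparatingDual.exists_separating_of_ne (R := ℝ) hxy
  exact ⟨ℓ, ⟨⟨ℓ, ℓ.continuous⟩, ⟨ℓ, 0, fun z ↦ (add_zero _).symm⟩, rfl⟩, hℓ⟩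

namespace C1Functions

/-- The ridge function `x ↦ σ (ℓ x + b)`, a single neuron with activation `σ`. -/
def ridge (σ : C1Functions ℝ ℝ) (ℓ : StrongDual ℝ E) (b : ℝ) : C1Functions E ℝ :=
  ⟨fun x ↦ σ (ℓ x + b), (contDiff σ).comp (ℓ.contDiff.add contDiff_const)⟩

theorem translate_ridge (σ : C1Functions ℝ ℝ) (ℓ : StrongDual ℝ E) (b : ℝ) (y : E) :
    translate (ridge σ ℓ b) y = ridge σ ℓ (b - ℓ y) := by
  refine Subtype.ext (funext fun x ↦ congrArg σ ?_)
  rw [map_sub]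
  ring

/-- One-hidden-layer networks with activation `σ`: the span of the functions
`x ↦ σ (ℓ x + b) • v`, where `v : F` is the vector of output weights of a neuron. -/
def networks (E F : Type*) [NormedAddCommGroup E] [NormedSpace ℝ E] [NormedAddCommGroup F]
    [NormedSpace ℝ F] (σ : C1Functions ℝ ℝ) : Submodule ℝ (C1Functions E F) :=
  Submodule.span ℝ {φ | ∃ ℓ b v, φ = smulVector (ridge σ ℓ b) v}

theorem exists_eq_sum_of_mem_networks {σ : C1Functions ℝ ℝ} {φ : C1Functions E F}
    (hφ : φ ∈ networks E F σ) :
    ∃ (k : ℕ) (ℓ : Fin k → StrongDual ℝ E) (b : Fin k → ℝ) (v : Fin k → F),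
      ∀ x, φ x = ∑ i, σ (ℓ i x + b i) • v i := by
  obtain ⟨k, c, g, rfl⟩ := Submodule.mem_span_set'.1 hφ
  choose ℓ b v hg using fun i ↦ (g i).2
  refine ⟨k, ℓ, b, fun i ↦ c i • v i, fun x ↦ ?_⟩
  have hterm : ∀ i, (g i).1.1 x = σ (ℓ i x + b i) • v i := fun i ↦ congr($(hg i).1 x)
  simp [hterm, smul_comm (c _)]

variable {L : Set (E × E)} [CompactSpace L] [FiniteDimensional ℝ E] [CompleteSpace F]
  {σ : C1Functions ℝ ℝ}

theorem integral_ridge_smul_tangentMapOn_translate_mem [MeasurableSpace E] [BorelSpace E]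
    {μ : Measure E} [μ.IsAddHaarMeasure] (ℓ : StrongDual ℝ E) (b : ℝ) {f : C1Functions E F}
    (hf : HasCompactSupport f) :
    ∫ t, ridge σ ℓ b t • tangentMapOn L (translate f t) ∂μ ∈
      ((networks E F σ).map (tangentMapOn L)).topologicalClosure := by
  rw [integral_smul_tangentMapOn_translate _ hf]
  refine integral_mem_of_isClosed_s2 (Submodule.isClosed_topologicalClosure _)
    (ae_of_all _ fun y ↦ Submodule.le_topologicalClosure _ (Submodule.mem_map_of_mem ?_))
  rw [translate_ridge]
  exact Submodule.subset_span ⟨_, _, _, rfl⟩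

theorem tangentMapOn_mem_closure_networks_of_hasCompactSupport
    (hpoly : ¬ ∃ p : Polynomial ℝ, ∀ t, σ t = p.eval t) {f : C1Functions E F}
    (hf : HasCompactSupport f) :
    tangentMapOn L f ∈ ((networks E F σ).map (tangentMapOn L)).topologicalClosure := by
  let : MeasurableSpace E := borel E
  have : BorelSpace E := ⟨rfl⟩
  have hclosed := Submodule.isClosed_topologicalClosure ((networks E F σ).map (tangentMapOn L))
  have hdense := dense_span_comp (σ := ⟨σ, continuous σ⟩) one_mem_affineFunctions
    (separatesPoints_affineFunctions (E := E)) hpoly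
  have hzero : translate f 0 = f := Subtype.ext (funext fun x ↦ congrArg f (sub_zero x))
  rw [← hzero]
  refine apply_zero_mem_of_forall_integral_smul_mem (μ := Measure.addHaar) hclosed
    (continuous_tangentMapOn_translate f)
    (integral_smul_mem_of_dense_span hclosed (continuous_tangentMapOn_translate f)
      (hasCompactSupport_tangentMapOn_translate hf) hdense ?_)
  rintro _ ⟨u, ⟨ℓ, b, hu⟩, rfl⟩
  simpa [ridge, hu] using
    integral_ridge_smul_tangentMapOn_translate_mem (σ := σ) (μ := Measure.addHaar) ℓ b hf

theorem tangentMapOn_mem_closure_networks (hpoly : ¬ ∃ p : Polynomial ℝ, ∀ t, σ t = p.eval t)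
    (f : C1Functions E F) :
    tangentMapOn L f ∈ ((networks E F σ).map (tangentMapOn L)).topologicalClosure := by
  obtain ⟨g, hg, hgf⟩ := exists_hasCompactSupport_tangentMapOn_eq (L := L) f
  exact hgf ▸ tangentMapOn_mem_closure_networks_of_hasCompactSupport hpoly hg

end C1Functions

end Networks

open C1Functions in
theorem stmt_2_general {E F : Type*} [NormedAddCommGroup E] [NormedSpace ℝ E]
    [FiniteDimensional ℝ E] [NormedAddCommGroup F] [NormedSpace ℝ F] [CompleteSpace F]
    {K : Set E} (hK : IsCompact K) {σ : ℝ → ℝ} (hσ : ContDiff ℝ 1 σ)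
    (hσpoly : ¬ ∃ p : Polynomial ℝ, ∀ t : ℝ, σ t = p.eval t)
    {f : E → F} (hf : ContDiff ℝ 1 f) {ε : ℝ} (hε : 0 < ε) :
    ∃ (k : ℕ) (ℓ : Fin k → StrongDual ℝ E) (b : Fin k → ℝ) (v : Fin k → F) (φ : E → F),
      (∀ x, φ x = ∑ i, σ (ℓ i x + b i) • v i) ∧
      (∀ x ∈ K, ‖f x - φ x‖ < ε) ∧
      ∀ x ∈ K, ‖fderiv ℝ f x - fderiv ℝ φ x‖ < ε := by
  let L : Set (E × E) := K ×ˢ Metric.closedBall 0 1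
  have : CompactSpace L :=
    isCompact_iff_compactSpace.1 (hK.prod (isCompact_closedBall (0 : E) 1))
  obtain ⟨_, ⟨φ, hφ, rfl⟩, hdist⟩ := Metric.mem_closure_iff.1
    (tangentMapOn_mem_closure_networks (L := L) (σ := ⟨σ, hσ⟩) hσpoly ⟨f, hf⟩) (ε / 2) (half_pos hε)
  obtain ⟨k, ℓ, b, v, hsum⟩ := exists_eq_sum_of_mem_networks hφ
  have hclose : ∀ x ∈ K, ∀ w : E, ‖w‖ ≤ 1 →
      ‖(f x - φ x, fderiv ℝ f x w - fderiv ℝ φ x w)‖ < ε / 2 := fun x hx w hw ↦ by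
    have hL : (x, w) ∈ L := ⟨hx, mem_closedBall_zero_iff.2 hw⟩
    have := (ContinuousMap.dist_apply_le_dist (⟨(x, w), hL⟩ : L)).trans_lt hdist
    rwa [dist_eq_norm] at this
  refine ⟨k, ℓ, b, v, φ, hsum, fun x hx ↦ ?_, fun x hx ↦ ?_⟩
  · exact ((norm_fst_le _).trans_lt (hclose x hx 0 (by simp))).trans (half_lt_self hε)
  · refine (ContinuousLinearMap.opNorm_le_of_unit_norm (half_pos hε).le fun w hw ↦ ?_).trans_lt
      (half_lt_self hε)
    exact ((norm_snd_le _).trans_lt (hclose x hx w hw.le)).le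

theorem sum_smul_eq_mulVec {n m k : ℕ} (σ : ℝ → ℝ)
    (ℓ : Fin k → StrongDual ℝ (EuclideanSpace ℝ (Fin n))) (b : Fin k → ℝ)
    (v : Fin k → EuclideanSpace ℝ (Fin m)) (x : EuclideanSpace ℝ (Fin n)) :
    (∑ i, σ (ℓ i x + b i) • v i).ofLp =
      (Matrix.of fun j i ↦ v i j).mulVec (fun i ↦
        σ (((Matrix.of fun i j ↦ ℓ i (EuclideanSpace.single j 1)).mulVec x + b) i)) := by
  have hcoord : ∀ i, ℓ i x = ∑ j, ℓ i (EuclideanSpace.single j 1) * x j := fun i ↦ by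
    conv_lhs => rw [← (EuclideanSpace.basisFun (Fin n) ℝ).sum_repr x]
    simp [mul_comm]
  ext j
  simp [Matrix.mulVec, dotProduct, hcoord, mul_comm]

/-- Simultaneous approximation of a continuously differentiable function and all of
its partial derivatives on a compact set by a one-hidden-layer neural network
`φ(x) = C·σ(Ax + b)`.  The `i`-th partial derivative of `g` at `x` is
`fderiv ℝ g x (EuclideanSpace.single i 1)`. -/
theorem stmt_2 (n m : ℕ) (K : Set (EuclideanSpace ℝ (Fin n))) (hK : IsCompact K)
    (σ : ℝ → ℝ) (hσ : ContDiff ℝ 1 σ)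
    (hσpoly : ¬ ∃ p : Polynomial ℝ, ∀ t : ℝ, σ t = p.eval t)
    (f : EuclideanSpace ℝ (Fin n) → EuclideanSpace ℝ (Fin m)) (hf : ContDiff ℝ 1 f)
    (ε : ℝ) (hε : 0 < ε) :
    ∃ (k : ℕ) (A : Matrix (Fin k) (Fin n) ℝ) (b : Fin k → ℝ) (C : Matrix (Fin m) (Fin k) ℝ),
      ∃ φ : EuclideanSpace ℝ (Fin n) → EuclideanSpace ℝ (Fin m),
        (∀ x, φ x = C.mulVec (fun i => σ ((A.mulVec x + b) i))) ∧
        (∀ x ∈ K, ‖f x - φ x‖ < ε) ∧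
        (∀ i : Fin n, ∀ x ∈ K,
          ‖fderiv ℝ f x (EuclideanSpace.single i 1) -
              fderiv ℝ φ x (EuclideanSpace.single i 1)‖ < ε) := by
  obtain ⟨k, ℓ, b, v, φ, hφ, hvalue, hderiv⟩ := stmt_2_general hK hσ hσpoly hf hε
  refine ⟨k, .of fun i j ↦ ℓ i (EuclideanSpace.single j 1), b, .of fun j i ↦ v i j, φ,
    fun x ↦ ?_, hvalue, fun i x hx ↦ ?_⟩
  · rw [hφ, sum_smul_eq_mulVec]
  · calc ‖fderiv ℝ f x (EuclideanSpace.single i 1) - fderiv ℝ φ x (EuclideanSpace.single i 1)‖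
        ≤ ‖fderiv ℝ f x - fderiv ℝ φ x‖ :=
          (fderiv ℝ f x - fderiv ℝ φ x).unit_le_opNorm _ (by simp)
      _ < ε := hderiv x hx
end

section
/- Let f : ℝⁿ → ℝⁿ be continuous, let K ⊂ ℝⁿ be compact, let A ⊆ K, and let V : ℝⁿ → ℝ be continuously differentiable with V(y) > 0 and ∇V(y)·f(y) < −δ/2 for all y ∈ K \ A, where δ > 0. Then every solution x : [0, ∞) → ℝⁿ of ẋ = f(x) that satisfies x(t) ∈ K for all t ≥ 0 must enter A in finite time: there exists T ≥ 0 with x(T) ∈ A. -/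
open scoped RealInnerProductSpace

/-! Along a solution that avoids `A`, the function `V` decreases at a uniformly positive rate, so it
tends to `-∞` as `t → ∞`; this is impossible because `V` is bounded below on `K \ A`. -/

open Filter Set

theorem tendsto_atBot_of_deriv_le_of_neg {g : ℝ → ℝ} {a C : ℝ} (hC : C < 0)
    (hcont : ContinuousOn g (Ici a)) (hdiff : DifferentiableOn ℝ g (Ioi a))
    (hderiv : ∀ t ∈ Ioi a, deriv g t ≤ C) : Tendsto g atTop atBot := by
  rw [← interior_Ici] at hdiff hderiv
  have hline : Tendsto (fun t ↦ g a + C * (t - a)) atTop atBot :=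
    tendsto_atBot_add_const_left _ _
      ((tendsto_atTop_add_const_right _ (-a) tendsto_id).const_mul_atTop_of_neg hC)
  refine tendsto_atBot_mono' _ ?_ hline
  filter_upwards [eventually_ge_atTop a] with t hat
  exact sub_le_iff_le_add'.mp <|
    (convex_Ici a).image_sub_le_mul_sub_of_deriv_le hcont hdiff hderiv a self_mem_Ici t hat hat

section IntegralCurve

variable {E : Type*} [NormedAddCommGroup E] [NormedSpace ℝ E] {V : E → ℝ} {C : ℝ} {x : ℝ → E}

theorem tendsto_comp_atBot_of_isIntegralCurveOn {v : ℝ → E → E} {a : ℝ} (hC : C < 0)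
    (hx : IsIntegralCurveOn x v (Ici a)) (hV : ∀ t ∈ Ici a, DifferentiableAt ℝ V (x t))
    (hlie : ∀ t ∈ Ioi a, fderiv ℝ V (x t) (v t (x t)) ≤ C) :
    Tendsto (V ∘ x) atTop atBot := by
  have hchain : ∀ t ∈ Ici a,
      HasDerivWithinAt (V ∘ x) (fderiv ℝ V (x t) (v t (x t))) (Ici a) t := fun t ht ↦
    (hV t ht).hasFDerivAt.comp_hasDerivWithinAt t (hx t ht)
  have hderiv : ∀ t ∈ Ioi a, HasDerivAt (V ∘ x) (fderiv ℝ V (x t) (v t (x t))) t := fun t ht ↦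
    (hchain t (Ioi_subset_Ici_self ht)).hasDerivAt (Ici_mem_nhds ht)
  exact tendsto_atBot_of_deriv_le_of_neg hC (fun t ht ↦ (hchain t ht).continuousWithinAt)
    (fun t ht ↦ (hderiv t ht).differentiableAt.differentiableWithinAt)
    fun t ht ↦ (hderiv t ht).deriv.trans_le (hlie t ht)

theorem stmt_9_general {f : E → E} {K A : Set E} (hC : C < 0)
    (hV : ∀ y ∈ K \ A, DifferentiableAt ℝ V y) (hVbdd : BddBelow (V '' (K \ A)))
    (hlie : ∀ y ∈ K \ A, fderiv ℝ V y (f y) ≤ C)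
    (hx : IsIntegralCurveOn x (fun _ ↦ f) (Ici 0)) (hxK : MapsTo x (Ici 0) K) :
    ∃ T : ℝ, 0 ≤ T ∧ x T ∈ A := by
  by_contra! havoid
  have hKA : MapsTo x (Ici 0) (K \ A) := fun t ht ↦ ⟨hxK ht, havoid t ht⟩
  have hVx : Tendsto (V ∘ x) atTop atBot :=
    tendsto_comp_atBot_of_isIntegralCurveOn hC hx (fun t ht ↦ hV _ (hKA ht))
      fun t ht ↦ hlie _ (hKA (Ioi_subset_Ici_self ht))
  obtain ⟨b, hb⟩ := hVbdd
  obtain ⟨t, hlt, ht⟩ := ((hVx.eventually_lt_atBot b).and (eventually_ge_atTop 0)).exists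
  exact hlt.not_ge (hb (mem_image_of_mem V (hKA ht)))

end IntegralCurve

/-- If `V(y) > 0` and `∇V(y)·f(y) < −δ/2` on `K \ A` with `K` compact and `δ > 0`,
then every solution of `ẋ = f(x)` that remains in `K` for all `t ≥ 0` must enter `A` in finite
time. -/
theorem stmt_9 (n : ℕ) (f : EuclideanSpace ℝ (Fin n) → EuclideanSpace ℝ (Fin n))
    (hf : Continuous f) (K A : Set (EuclideanSpace ℝ (Fin n)))
    (hK : IsCompact K) (hAK : A ⊆ K)
    (V : EuclideanSpace ℝ (Fin n) → ℝ) (hV : ContDiff ℝ 1 V)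
    (δ : ℝ) (hδ : 0 < δ)
    (hVpos : ∀ y ∈ K \ A, 0 < V y)
    (hlie : ∀ y ∈ K \ A, ⟪gradient V y, f y⟫ < -δ / 2)
    (x : ℝ → EuclideanSpace ℝ (Fin n))
    (hsol : ∀ t : ℝ, 0 ≤ t → HasDerivAt x (f (x t)) t)
    (hinK : ∀ t : ℝ, 0 ≤ t → x t ∈ K) :
    ∃ T : ℝ, 0 ≤ T ∧ x T ∈ A :=
  stmt_9_general (by linarith : -δ / 2 < 0) (fun y _ ↦ hV.differentiable one_ne_zero y)
    ⟨0, forall_mem_image.mpr fun y hy ↦ (hVpos y hy).le⟩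
    (fun y hy ↦ inner_gradient_left.symm.trans_le (hlie y hy).le)
    (fun t ht ↦ (hsol t ht).hasDerivWithinAt) hinK
end

section
/- (Uniform stability part of the Lyapunov sufficient condition for UAS.) Let A ⊂ ℝⁿ be a compact set, let D ⊆ ℝⁿ be an open set containing A, let f : ℝⁿ → ℝⁿ be continuous, and let V : D → ℝ be continuously differentiable with V(x) = 0 for all x ∈ A, V(x) > 0 for all x ∈ D \ A, and ∇V(x)·f(x) < 0 for all x ∈ D \ A. Then for every ε > 0 such that the closed ε-neighborhood of A is contained in D, there exists δ > 0 such that every solution x : [0, ∞) → ℝⁿ of ẋ = f(x) with dist(x(0), A) < δ satisfies dist(x(t), A) < ε for all t ≥ 0. -/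
open scoped RealInnerProductSpace

/-!
A solution that leaves the open `ε`-neighbourhood of `A` must cross its boundary at a first exit
time. That boundary is compact and disjoint from `A`, so `V` has a positive lower bound `m` there,
whereas `V` does not increase along the solution before it exits. Hence solutions starting in the
neighbourhood `{V < m}` of `A` never exit. The decay condition extends to the points of `A` because
they are minima of `V`, where the derivative vanishes.
-/

open Metric Set Topology

theorem exists_first_exit_mem_frontier {ι X : Type*} [ConditionallyCompleteLinearOrder ι]
    [TopologicalSpace ι] [OrderTopology ι] [DenselyOrdered ι] [TopologicalSpace X] {O : Set X}
    (hO : IsOpen O) {γ : ι → X} {a b : ι} (hab : a ≤ b) (hγ : ContinuousOn γ (Icc a b))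
    (ha : γ a ∈ O) (hb : γ b ∉ O) :
    ∃ T ∈ Ioc a b, γ T ∈ frontier O ∧ ∀ t ∈ Ico a T, γ t ∈ O := by
  have exits_compact : IsCompact (Icc a b ∩ γ ⁻¹' Oᶜ) :=
    isCompact_Icc.of_isClosed_subset
      (hγ.preimage_isClosed_of_isClosed isClosed_Icc hO.isClosed_compl) inter_subset_left
  obtain ⟨T, ⟨hT, hTO⟩, T_least⟩ := exits_compact.exists_isLeast ⟨b, right_mem_Icc.2 hab, hb⟩
  have haT : a < T := hT.1.lt_of_ne (by rintro rfl; exact hTO ha)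
  have mem_before : ∀ t ∈ Ico a T, γ t ∈ O := fun t ht ↦ by
    by_contra htO
    exact ht.2.not_ge (T_least ⟨⟨ht.1, ht.2.le.trans hT.2⟩, htO⟩)
  have mem_closure : γ T ∈ closure O := by
    refine ((hγ T hT).mono fun t ht ↦ ?_).mem_closure (s := Ico a T) ?_ mem_before
    · exact ⟨ht.1, ht.2.le.trans hT.2⟩
    · rw [closure_Ico haT.ne]
      exact right_mem_Icc.2 haT.le
  exact ⟨T, ⟨haT, hT.2⟩, hO.frontier_eq ▸ ⟨mem_closure, hTO⟩, mem_before⟩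

theorem frontier_thickening_subset_cthickening_sdiff {X : Type*} [PseudoMetricSpace X] {s : Set X}
    {ε : ℝ} (hε : 0 < ε) : frontier (thickening ε s) ⊆ cthickening ε s \ s := by
  rw [isOpen_thickening.frontier_eq]
  exact sdiff_subset_sdiff (closure_thickening_subset_cthickening ε s)
    (self_subset_thickening hε s)

section LyapunovFunction

variable {E : Type*} [NormedAddCommGroup E] [NormedSpace ℝ E]
  {V : E → ℝ} {v : ℝ → E → E} {γ : ℝ → E} {a b : ℝ} {O A : Set E}

theorem antitoneOn_comp_of_isIntegralCurveOn (hγ : IsIntegralCurveOn γ v (Icc a b))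
    (hVγ : ContinuousOn (V ∘ γ) (Icc a b)) (hV : ∀ t ∈ Ioo a b, DifferentiableAt ℝ V (γ t))
    (hdecay : ∀ t ∈ Ioo a b, fderiv ℝ V (γ t) (v t (γ t)) ≤ 0) :
    AntitoneOn (V ∘ γ) (Icc a b) := by
  refine antitoneOn_of_hasDerivWithinAt_nonpos (convex_Icc a b) hVγ
    (f' := fun t ↦ fderiv ℝ V (γ t) (v t (γ t))) ?_ ?_ <;> rw [interior_Icc]
  · intro t ht
    exact (hV t ht).hasFDerivAt.comp_hasDerivWithinAt t
      ((hγ t (Ioo_subset_Icc_self ht)).mono Ioo_subset_Icc_self)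
  · exact hdecay

theorem mem_of_isIntegralCurveOn_of_forall_frontier_lt (hO : IsOpen O) (hV : DiffContOnCl ℝ V O)
    (hdecay : ∀ t, ∀ y ∈ O, fderiv ℝ V y (v t y) ≤ 0) (hab : a ≤ b)
    (hγ : IsIntegralCurveOn γ v (Icc a b)) (ha : γ a ∈ O)
    (hlt : ∀ y ∈ frontier O, V (γ a) < V y) : γ b ∈ O := by
  by_contra hb
  obtain ⟨T, hT, hTfrontier, mem_before⟩ :=
    exists_first_exit_mem_frontier hO hab hγ.continuousOn ha hb
  have hγT : IsIntegralCurveOn γ v (Icc a T) := hγ.mono (Icc_subset_Icc_right hT.2)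
  have maps_closure : MapsTo γ (Icc a T) (closure O) := fun t ht ↦ by
    rcases ht.2.eq_or_lt with rfl | htT
    · exact frontier_subset_closure hTfrontier
    · exact subset_closure (mem_before t ⟨ht.1, htT⟩)
  have V_antitone : AntitoneOn (V ∘ γ) (Icc a T) :=
    antitoneOn_comp_of_isIntegralCurveOn hγT
      (hV.continuousOn.comp hγT.continuousOn maps_closure)
      (fun t ht ↦ hV.differentiableAt hO (mem_before t (Ioo_subset_Ico_self ht)))
      (fun t ht ↦ hdecay t _ (mem_before t (Ioo_subset_Ico_self ht)))
  exact (hlt _ hTfrontier).not_ge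
    (V_antitone (left_mem_Icc.2 hT.1.le) (right_mem_Icc.2 hT.1.le) hT.1.le)

theorem exists_mem_nhdsSet_forall_isIntegralCurveOn_mem (hO : IsOpen O)
    (hfrontier : IsCompact (frontier O)) (hAO : A ⊆ O) (hV : DiffContOnCl ℝ V O)
    (hVA : ∀ y ∈ A, V y ≤ 0) (hVfrontier : ∀ y ∈ frontier O, 0 < V y)
    (hdecay : ∀ t, ∀ y ∈ O, fderiv ℝ V y (v t y) ≤ 0) :
    ∃ U ∈ 𝓝ˢ A, ∀ (γ : ℝ → E) (a b : ℝ), a ≤ b → IsIntegralCurveOn γ v (Icc a b) →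
      γ a ∈ U → γ b ∈ O := by
  obtain ⟨m, hm, m_le⟩ :=
    hfrontier.exists_forall_le' (hV.continuousOn.mono frontier_subset_closure) hVfrontier
  have sublevel_open : IsOpen (O ∩ V ⁻¹' Iio m) :=
    hV.differentiableOn.continuousOn.isOpen_inter_preimage hO isOpen_Iio
  refine ⟨O ∩ V ⁻¹' Iio m, sublevel_open.mem_nhdsSet.2 fun y hy ↦
    ⟨hAO hy, (hVA y hy).trans_lt hm⟩, fun γ a b hab hγ ⟨haO, haV⟩ ↦ ?_⟩
  exact mem_of_isIntegralCurveOn_of_forall_frontier_lt hO hV hdecay hab hγ haO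
    fun y hy ↦ lt_of_lt_of_le haV (m_le y hy)

theorem fderiv_apply_nonpos_of_nonneg_of_pos_imp {y w : E} (hnonneg : ∀ᶠ z in 𝓝 y, 0 ≤ V z)
    (hpos : 0 < V y → fderiv ℝ V y w ≤ 0) : fderiv ℝ V y w ≤ 0 := by
  rcases hnonneg.self_of_nhds.eq_or_lt with hzero | hVy
  · have hmin : IsLocalMin V y := by
      filter_upwards [hnonneg] with z hz
      exact hzero ▸ hz
    simp [hmin.fderiv_eq_zero]
  · exact hpos hVy

theorem stmt_10_general [ProperSpace E] (hA : IsCompact A) {ε : ℝ} (hε : 0 < ε)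
    (hV : DiffContOnCl ℝ V (thickening ε A)) (hV0 : ∀ y ∈ A, V y = 0)
    (hVpos : ∀ y ∈ cthickening ε A \ A, 0 < V y)
    (hdecay : ∀ t, ∀ y ∈ thickening ε A \ A, fderiv ℝ V y (v t y) ≤ 0) :
    ∃ δ : ℝ, 0 < δ ∧ ∀ (γ : ℝ → E) (a b : ℝ), a ≤ b → IsIntegralCurveOn γ v (Icc a b) →
      infDist (γ a) A < δ → infDist (γ b) A < ε := by
  rcases A.eq_empty_or_nonempty with rfl | hne
  · exact ⟨1, one_pos, fun γ a b _ _ _ ↦ by simpa using hε⟩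
  have V_nonneg : ∀ y ∈ thickening ε A, 0 ≤ V y := fun y hy ↦ by
    by_cases hyA : y ∈ A
    · exact (hV0 y hyA).ge
    · exact (hVpos y ⟨thickening_subset_cthickening ε A hy, hyA⟩).le
  have decay_on_thickening : ∀ t, ∀ y ∈ thickening ε A, fderiv ℝ V y (v t y) ≤ 0 := fun t y hy ↦
    fderiv_apply_nonpos_of_nonneg_of_pos_imp
      (Filter.eventually_of_mem (isOpen_thickening.mem_nhds hy) V_nonneg) fun hpos ↦
        hdecay t y ⟨hy, fun hyA ↦ hpos.ne' (hV0 y hyA)⟩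
  have frontier_compact : IsCompact (frontier (thickening ε A)) :=
    hA.cthickening.of_isClosed_subset isClosed_frontier
      ((frontier_thickening_subset_cthickening_sdiff hε).trans sdiff_subset)
  obtain ⟨U, hU, mem_of_start_mem⟩ := exists_mem_nhdsSet_forall_isIntegralCurveOn_mem
    isOpen_thickening frontier_compact (self_subset_thickening hε A) hV (fun y hy ↦ (hV0 y hy).le)
    (fun y hy ↦ hVpos y (frontier_thickening_subset_cthickening_sdiff hε hy)) decay_on_thickening
  obtain ⟨δ, hδ, thickening_subset⟩ := (hasBasis_nhdsSet_thickening hA).mem_iff.1 hU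
  simp only [← mem_thickening_iff_infDist_lt hne]
  exact ⟨δ, hδ, fun γ a b hab hγ ha ↦ mem_of_start_mem γ a b hab hγ (thickening_subset ha)⟩

end LyapunovFunction

/-- uniform stability part of the Lyapunov sufficient condition for UAS:
if `V` is a Lyapunov function for the compact set `A` on the open set `D ⊇ A`, then for every
`ε > 0` whose closed `ε`-neighborhood of `A` lies in `D` there is `δ > 0` such that every solution
of `ẋ = f(x)` starting within distance `δ` of `A` stays within distance `ε` of `A` for all
`t ≥ 0`. -/
theorem stmt_10 (n : ℕ) (A D : Set (EuclideanSpace ℝ (Fin n)))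
    (hA : IsCompact A) (hD : IsOpen D) (hAD : A ⊆ D)
    (f : EuclideanSpace ℝ (Fin n) → EuclideanSpace ℝ (Fin n)) (hf : Continuous f)
    (V : EuclideanSpace ℝ (Fin n) → ℝ) (hV : ContDiffOn ℝ 1 V D)
    (hV0 : ∀ x ∈ A, V x = 0)
    (hVpos : ∀ x ∈ D \ A, 0 < V x)
    (hlie : ∀ x ∈ D \ A, ⟪gradient V x, f x⟫ < 0) :
    ∀ ε : ℝ, 0 < ε → Metric.cthickening ε A ⊆ D →
      ∃ δ : ℝ, 0 < δ ∧
        ∀ x : ℝ → EuclideanSpace ℝ (Fin n),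
          (∀ t : ℝ, 0 ≤ t → HasDerivAt x (f (x t)) t) →
          Metric.infDist (x 0) A < δ →
          ∀ t : ℝ, 0 ≤ t → Metric.infDist (x t) A < ε := by
  intro ε hε hεD
  have hVε : DiffContOnCl ℝ V (thickening ε A) :=
    ((hV.differentiableOn one_ne_zero).mono
      ((closure_thickening_subset_cthickening ε A).trans hεD)).diffContOnCl
  obtain ⟨δ, hδ, stable⟩ := stmt_10_general (v := fun _ ↦ f) hA hε hVε hV0
    (fun y hy ↦ hVpos y ⟨hεD hy.1, hy.2⟩)
    (fun _ y hy ↦ by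
      rw [← inner_gradient_left]
      exact (hlie y ⟨hεD (thickening_subset_cthickening ε A hy.1), hy.2⟩).le)
  exact ⟨δ, hδ, fun x hx hx0 t ht ↦
    stable x 0 t ht (fun s hs ↦ (hx s hs.1).hasDerivWithinAt) hx0⟩
end

section
/- (Uniform attractivity part of the Lyapunov sufficient condition for UAS.) Let A ⊂ ℝⁿ be a compact set, let D ⊆ ℝⁿ be an open set containing A, let f : ℝⁿ → ℝⁿ be continuous, and let V : D → ℝ be continuously differentiable with V(x) = 0 for all x ∈ A, V(x) > 0 for all x ∈ D \ A, and ∇V(x)·f(x) < 0 for all x ∈ D \ A. Then there exists ρ > 0 such that every solution x : [0, ∞) → ℝⁿ of ẋ = f(x) with dist(x(0), A) < ρ satisfies dist(x(t), A) → 0 as t → ∞. -/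
open scoped RealInnerProductSpace

/-!
A compact neighbourhood `K ⊆ D` of `A` traps every solution that starts close to `A`: such a
solution starts below the minimum of `V` over the frontier of `K`, and `V` is nonincreasing along
it (on `A`, where the sign of the Lie derivative is not prescribed, `V` is minimal and its
derivative vanishes). Along a trapped solution `V` tends to zero: if it stayed above some `c > 0`,
then the Lie derivative, bounded away from zero on the compact set `{y ∈ K | c ≤ V y}`, would drive
`V` below zero in finite time. Since `V` is positive on `K \ A`, this forces the distance to `A` to
tend to zero.
-/

open Filter Metric Set Topology

theorem tendsto_infDist_zero_of_tendsto_zero {ι X : Type*} [PseudoMetricSpace X] {l : Filter ι}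
    {A K : Set X} {V : X → ℝ} {u : ι → X} (hK : IsCompact K) (hV : ContinuousOn V K)
    (hpos : ∀ y ∈ K \ A, 0 < V y) (huK : ∀ᶠ i in l, u i ∈ K)
    (hu : Tendsto (fun i ↦ V (u i)) l (𝓝 0)) :
    Tendsto (fun i ↦ infDist (u i) A) l (𝓝 0) := by
  refine tendsto_order.2 ⟨fun a ha ↦ .of_forall fun _ ↦ ha.trans_le infDist_nonneg, fun ε hε ↦ ?_⟩
  have hfar : IsCompact (K ∩ {y | ε ≤ infDist y A}) :=
    hK.inter_right (isClosed_le continuous_const (continuous_infDist_pt A))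
  have hfar_pos : ∀ y ∈ K ∩ {y | ε ≤ infDist y A}, 0 < V y := fun y hy ↦
    hpos y ⟨hy.1, fun hyA ↦ (hε.trans_le hy.2).ne' (infDist_zero_of_mem hyA)⟩
  obtain ⟨m, hm, hmV⟩ := hfar.exists_forall_le' (hV.mono inter_subset_left) hfar_pos
  filter_upwards [huK, hu.eventually_lt_const hm] with i hiK hiV
  by_contra! hi
  exact (hmV (u i) ⟨hiK, hi⟩).not_gt hiV

section NormedSpace

variable {E : Type*} [NormedAddCommGroup E] [NormedSpace ℝ E] {f : E → E} {V : E → ℝ}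
  {A D K : Set E} {x : ℝ → E}

theorem sub_le_mul_sub_of_fderiv_apply_le {s : Set ℝ} {C : ℝ} (hs : Convex ℝ s)
    (hx : IsIntegralCurveOn x (fun _ ↦ f) s) (hV : ∀ t ∈ s, DifferentiableAt ℝ V (x t))
    (hC : ∀ t ∈ s, fderiv ℝ V (x t) (f (x t)) ≤ C) {a b : ℝ} (ha : a ∈ s) (hb : b ∈ s)
    (hab : a ≤ b) : V (x b) - V (x a) ≤ C * (b - a) := by
  have hderiv : ∀ t ∈ s, HasDerivWithinAt (V ∘ x) (fderiv ℝ V (x t) (f (x t))) s t :=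
    fun t ht ↦ (hV t ht).hasFDerivAt.comp_hasDerivWithinAt t (hx t ht)
  have hderiv_int : ∀ t ∈ interior s, HasDerivAt (V ∘ x) (fderiv ℝ V (x t) (f (x t))) t :=
    fun t ht ↦ (hderiv t (interior_subset ht)).hasDerivAt (mem_interior_iff_mem_nhds.1 ht)
  refine hs.image_sub_le_mul_sub_of_deriv_le (f := V ∘ x)
    (fun t ht ↦ (hderiv t ht).continuousWithinAt)
    (fun t ht ↦ (hderiv_int t ht).differentiableAt.differentiableWithinAt)
    (fun t ht ↦ ?_) a ha b hb hab
  rw [(hderiv_int t ht).deriv]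
  exact hC t (interior_subset ht)

/-- `V` is a strict Lyapunov function on the open set `D` for the set `A` and the autonomous vector
field `f`: it is differentiable on `D`, vanishes on `A`, is positive on `D \ A`, and decreases
strictly along `f` on `D \ A`. Regularity of `f` and of the derivative of `V` is asked for only
through the continuity of the Lie derivative off `A`. -/
structure IsStrictLyapunov (f : E → E) (V : E → ℝ) (A D : Set E) : Prop where
  isOpen : IsOpen D
  subset : A ⊆ D
  differentiableOn : DifferentiableOn ℝ V D
  eq_zero : ∀ y ∈ A, V y = 0
  pos : ∀ y ∈ D \ A, 0 < V y
  continuousOn_lie : ContinuousOn (fun y ↦ fderiv ℝ V y (f y)) (D \ A)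
  lie_neg : ∀ y ∈ D \ A, fderiv ℝ V y (f y) < 0

namespace IsStrictLyapunov

theorem differentiableAt (h : IsStrictLyapunov f V A D) {y : E} (hy : y ∈ D) :
    DifferentiableAt ℝ V y :=
  h.differentiableOn.differentiableAt (h.isOpen.mem_nhds hy)

theorem nonneg (h : IsStrictLyapunov f V A D) {y : E} (hy : y ∈ D) : 0 ≤ V y := by
  by_cases hyA : y ∈ A
  · exact (h.eq_zero y hyA).ge
  · exact (h.pos y ⟨hy, hyA⟩).le

theorem lie_nonpos (h : IsStrictLyapunov f V A D) {y : E} (hy : y ∈ D) :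
    fderiv ℝ V y (f y) ≤ 0 := by
  by_cases hyA : y ∈ A
  · have hmin : IsLocalMin V y := by
      filter_upwards [h.isOpen.mem_nhds hy] with z hz
      exact (h.eq_zero y hyA).trans_le (h.nonneg hz)
    simp [hmin.fderiv_eq_zero]
  · exact (h.lie_neg y ⟨hy, hyA⟩).le

theorem antitoneOn_comp (h : IsStrictLyapunov f V A D) {s : Set ℝ} (hs : Convex ℝ s)
    (hx : IsIntegralCurveOn x (fun _ ↦ f) s) (hxD : MapsTo x s D) :
    AntitoneOn (fun t ↦ V (x t)) s := by
  intro a ha b hb hab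
  simpa using sub_le_mul_sub_of_fderiv_apply_le hs hx (fun t ht ↦ h.differentiableAt (hxD ht))
    (fun t ht ↦ h.lie_nonpos (hxD ht)) ha hb hab

theorem mapsTo_sublevel (h : IsStrictLyapunov f V A D) {c : ℝ} (hK : IsClosed K) (hKD : K ⊆ D)
    (hfrontier : ∀ y ∈ frontier K, c < V y) (hx : IsIntegralCurveOn x (fun _ ↦ f) (Ici 0))
    (hx0 : x 0 ∈ K ∩ V ⁻¹' Iic c) : MapsTo x (Ici 0) (K ∩ V ⁻¹' Iic c) := by
  intro b (hb : 0 ≤ b)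
  have hclosed : IsClosed (K ∩ V ⁻¹' Iic c) :=
    (h.differentiableOn.continuousOn.mono hKD).preimage_isClosed_of_isClosed hK isClosed_Iic
  have hpreimage_closed : IsClosed (x ⁻¹' (K ∩ V ⁻¹' Iic c) ∩ Icc 0 b) := by
    rw [inter_comm]
    exact (hx.continuousOn.mono Icc_subset_Ici_self).preimage_isClosed_of_isClosed
      isClosed_Icc hclosed
  refine hpreimage_closed.Icc_subset_of_forall_mem_nhdsWithin hx0 ?_ (right_mem_Icc.2 hb)
  rintro t ⟨⟨htK, htc⟩, ht0, -⟩
  have hinterior : x t ∈ interior K := by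
    by_contra hnot
    exact (hfrontier (x t) ⟨subset_closure htK, hnot⟩).not_ge htc
  have hIci : ∀ᶠ s in 𝓝[≥] t, x s ∈ K :=
    ((hx.continuousWithinAt ht0).mono (Ici_subset_Ici.2 ht0)).eventually
      (mem_interior_iff_mem_nhds.1 hinterior)
  obtain ⟨u, htu, huK⟩ := mem_nhdsGE_iff_exists_Icc_subset.1 hIci
  have hanti : AntitoneOn (fun s ↦ V (x s)) (Icc t u) :=
    h.antitoneOn_comp (convex_Icc t u)
      (hx.mono (Icc_subset_Ici_self.trans (Ici_subset_Ici.2 ht0))) fun _ hs ↦ hKD (huK hs)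
  filter_upwards [Icc_mem_nhdsGT htu] with s hs
  exact ⟨huK hs, (hanti (left_mem_Icc.2 (le_of_lt htu)) hs hs.1).trans htc⟩

theorem exists_isCompact_forall_mapsTo [LocallyCompactSpace E] (h : IsStrictLyapunov f V A D)
    (hA : IsCompact A) :
    ∃ K U, IsCompact K ∧ K ⊆ D ∧ IsOpen U ∧ A ⊆ U ∧
      ∀ x, IsIntegralCurveOn x (fun _ ↦ f) (Ici 0) → x 0 ∈ U → MapsTo x (Ici 0) K := by
  have hVcont : ContinuousOn V D := h.differentiableOn.continuousOn
  obtain ⟨K, hK, hAK, hKD⟩ := exists_compact_between hA h.isOpen h.subset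
  have hfrontier : frontier K ⊆ K := hK.isClosed.frontier_subset
  obtain ⟨m, hm, hmV⟩ : ∃ m, 0 < m ∧ ∀ y ∈ frontier K, m ≤ V y :=
    (hK.of_isClosed_subset isClosed_frontier hfrontier).exists_forall_le'
      (hVcont.mono (hfrontier.trans hKD))
      fun y hy ↦ h.pos y ⟨hKD (hfrontier hy), fun hyA ↦ hy.2 (hAK hyA)⟩
  refine ⟨K, interior K ∩ V ⁻¹' Iio m, hK, hKD,
    (hVcont.mono (interior_subset.trans hKD)).isOpen_inter_preimage isOpen_interior isOpen_Iio,
    fun y hy ↦ ⟨hAK hy, (h.eq_zero y hy).trans_lt hm⟩, fun x hx ⟨hx0K, hx0m⟩ ↦ ?_⟩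
  have hx0_frontier : ∀ y ∈ frontier K, V (x 0) < V y := fun y hy ↦ lt_of_lt_of_le hx0m (hmV y hy)
  exact (h.mapsTo_sublevel hK.isClosed hKD hx0_frontier hx
    ⟨interior_subset hx0K, le_refl (V (x 0))⟩).mono_right inter_subset_left

theorem exists_comp_lt (h : IsStrictLyapunov f V A D) {c : ℝ} (hc : 0 < c) (hK : IsCompact K)
    (hKD : K ⊆ D) (hx : IsIntegralCurveOn x (fun _ ↦ f) (Ici 0)) (hxK : MapsTo x (Ici 0) K) :
    ∃ T ≥ 0, V (x T) < c := by
  by_contra! hge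
  have hsuper : IsCompact (K ∩ V ⁻¹' Ici c) :=
    hK.of_isClosed_subset ((h.differentiableOn.continuousOn.mono hKD).preimage_isClosed_of_isClosed
      hK.isClosed isClosed_Ici) inter_subset_left
  have hsuper_subset : K ∩ V ⁻¹' Ici c ⊆ D \ A := fun y hy ↦
    ⟨hKD hy.1, fun hyA ↦ (hc.trans_le hy.2).ne' (h.eq_zero y hyA)⟩
  obtain ⟨δ, hδ, hlie⟩ : ∃ δ, 0 < δ ∧ ∀ y ∈ K ∩ V ⁻¹' Ici c, δ ≤ -fderiv ℝ V y (f y) :=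
    hsuper.exists_forall_le' (h.continuousOn_lie.mono hsuper_subset).neg
      fun y hy ↦ neg_pos.2 (h.lie_neg y (hsuper_subset hy))
  have hT : 0 ≤ V (x 0) / δ := div_nonneg (hc.le.trans (hge 0 le_rfl)) hδ.le
  have hdecay : V (x (V (x 0) / δ)) - V (x 0) ≤ -δ * (V (x 0) / δ - 0) :=
    sub_le_mul_sub_of_fderiv_apply_le (convex_Ici 0) hx
      (fun t ht ↦ h.differentiableAt (hKD (hxK ht)))
      (fun t ht ↦ le_neg_of_le_neg (hlie (x t) ⟨hxK ht, hge t ht⟩)) self_mem_Ici hT hT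
  rw [sub_zero, neg_mul, mul_div_cancel₀ _ hδ.ne'] at hdecay
  linarith [hge _ hT]

theorem tendsto_comp_zero (h : IsStrictLyapunov f V A D) (hK : IsCompact K) (hKD : K ⊆ D)
    (hx : IsIntegralCurveOn x (fun _ ↦ f) (Ici 0)) (hxK : MapsTo x (Ici 0) K) :
    Tendsto (fun t ↦ V (x t)) atTop (𝓝 0) := by
  have hxD : MapsTo x (Ici 0) D := hxK.mono_right hKD
  refine tendsto_order.2 ⟨fun a ha ↦ ?_, fun c hc ↦ ?_⟩
  · filter_upwards [eventually_ge_atTop 0] with t ht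
    exact ha.trans_le (h.nonneg (hxD ht))
  · obtain ⟨T, hT, hTc⟩ := h.exists_comp_lt hc hK hKD hx hxK
    filter_upwards [eventually_ge_atTop T] with t ht
    exact (h.antitoneOn_comp (convex_Ici 0) hx hxD hT (hT.trans ht) ht).trans_lt hTc

end IsStrictLyapunov

theorem stmt_11_general [LocallyCompactSpace E] (hA : IsCompact A)
    (h : IsStrictLyapunov f V A D) :
    ∃ ρ : ℝ, 0 < ρ ∧ ∀ x : ℝ → E, IsIntegralCurveOn x (fun _ ↦ f) (Ici 0) →
      infDist (x 0) A < ρ → Tendsto (fun t ↦ infDist (x t) A) atTop (𝓝 0) := by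
  rcases A.eq_empty_or_nonempty with rfl | hne
  · exact ⟨1, one_pos, fun x _ _ ↦ by simp⟩
  obtain ⟨K, U, hK, hKD, hU, hAU, htrap⟩ := h.exists_isCompact_forall_mapsTo hA
  obtain ⟨ρ, hρ, hρU⟩ := hA.exists_thickening_subset_open hU hAU
  refine ⟨ρ, hρ, fun x hx hx0 ↦ ?_⟩
  have hxK : MapsTo x (Ici 0) K := htrap x hx (hρU ((mem_thickening_iff_infDist_lt hne).2 hx0))
  exact tendsto_infDist_zero_of_tendsto_zero hK (h.differentiableOn.continuousOn.mono hKD)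
    (fun y hy ↦ h.pos y ⟨hKD hy.1, hy.2⟩) ((eventually_ge_atTop 0).mono hxK)
    (h.tendsto_comp_zero hK hKD hx hxK)

end NormedSpace

theorem isStrictLyapunov_of_inner_gradient_neg {E : Type*} [NormedAddCommGroup E]
    [InnerProductSpace ℝ E] [CompleteSpace E] {f : E → E} {V : E → ℝ} {A D : Set E}
    (hD : IsOpen D) (hAD : A ⊆ D) (hf : ContinuousOn f (D \ A)) (hV : ContDiffOn ℝ 1 V D)
    (hV0 : ∀ y ∈ A, V y = 0) (hVpos : ∀ y ∈ D \ A, 0 < V y)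
    (hlie : ∀ y ∈ D \ A, ⟪gradient V y, f y⟫ < 0) : IsStrictLyapunov f V A D where
  isOpen := hD
  subset := hAD
  differentiableOn := hV.differentiableOn one_ne_zero
  eq_zero := hV0
  pos := hVpos
  continuousOn_lie :=
    ((hV.continuousOn_fderiv_of_isOpen hD le_rfl).mono sdiff_subset).clm_apply hf
  lie_neg y hy := by simpa only [gradient, InnerProductSpace.toDual_symm_apply] using hlie y hy

/-- uniform attractivity part of the Lyapunov sufficient condition for UAS:
if `V` is a Lyapunov function for the compact set `A` on the open set `D ⊇ A`, then there exists
`ρ > 0` such that every solution of `ẋ = f(x)` starting within distance `ρ` of `A` satisfies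
`dist(x(t), A) → 0` as `t → ∞`. -/
theorem stmt_11 (n : ℕ) (A D : Set (EuclideanSpace ℝ (Fin n)))
    (hA : IsCompact A) (hD : IsOpen D) (hAD : A ⊆ D)
    (f : EuclideanSpace ℝ (Fin n) → EuclideanSpace ℝ (Fin n)) (hf : Continuous f)
    (V : EuclideanSpace ℝ (Fin n) → ℝ) (hV : ContDiffOn ℝ 1 V D)
    (hV0 : ∀ x ∈ A, V x = 0)
    (hVpos : ∀ x ∈ D \ A, 0 < V x)
    (hlie : ∀ x ∈ D \ A, ⟪gradient V x, f x⟫ < 0) :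
    ∃ ρ : ℝ, 0 < ρ ∧
      ∀ x : ℝ → EuclideanSpace ℝ (Fin n),
        (∀ t : ℝ, 0 ≤ t → HasDerivAt x (f (x t)) t) →
        Metric.infDist (x 0) A < ρ →
        Filter.Tendsto (fun t => Metric.infDist (x t) A) Filter.atTop (nhds 0) := by
  have h := isStrictLyapunov_of_inner_gradient_neg hD hAD hf.continuousOn hV hV0 hVpos hlie
  obtain ⟨ρ, hρ, hattr⟩ := stmt_11_general hA h
  exact ⟨ρ, hρ, fun x hx ↦ hattr x fun t ht ↦ (hx t ht).hasDerivWithinAt⟩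
end

section
/- (Regions of attraction from Lyapunov sublevel sets.) Let A ⊂ ℝⁿ be a compact set, let D ⊆ ℝⁿ be an open set containing A, let f : ℝⁿ → ℝⁿ be continuous, and let V : D → ℝ be continuously differentiable with V(x) = 0 for all x ∈ A, V(x) > 0 for all x ∈ D \ A, and ∇V(x)·f(x) < 0 for all x ∈ D \ A. Let c > 0 and suppose the sublevel set V^c := {x ∈ D : V(x) ≤ c} is compact. Then V^c is forward invariant and is a region of attraction of A: every solution x : [0, ∞) → ℝⁿ of ẋ = f(x) with x(0) ∈ V^c satisfies x(t) ∈ V^c for all t ≥ 0 and dist(x(t), A) → 0 as t → ∞. -/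
open scoped RealInnerProductSpace

/-!
Points of `A ∩ D` are local minima of `V`, so the derivative of `V` along `f` is nonpositive on all
of `D`, and `V` cannot increase along a solution as long as the solution stays in `D`. Since `D` is
open and the sublevel set is closed, a solution can therefore not leave the sublevel set. The part
of it where `δ ≤ V` is compact and the derivative of `V` along `f` is bounded away from zero there,
so every solution leaves this part, after which `V` stays below `δ`. Finally `V` is bounded away
from zero on the part of the sublevel set outside any neighbourhood of `A`, so `V → 0` along a
solution forces the solution into every neighbourhood of `A`.
-/

open Set Filter Topology

section SetConvergence

theorem tendsto_infDist_nhdsSet {X : Type*} [PseudoMetricSpace X] (A : Set X) :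
    Tendsto (Metric.infDist · A) (𝓝ˢ A) (𝓝 0) := by
  refine tendsto_iff_comap.2 (nhdsSet_le.2 fun a ha => tendsto_iff_comap.1 ?_)
  simpa only [Metric.infDist_zero_of_mem ha] using (Metric.continuous_infDist_pt A).tendsto a

theorem tendsto_nhdsSet_of_forall_eventually_lt {X ι : Type*} [TopologicalSpace X] {K A : Set X}
    {V : X → ℝ} {u : ι → X} {l : Filter ι} (hK : IsCompact K) (hVK : ContinuousOn V K)
    (hpos : ∀ y ∈ K \ A, 0 < V y) (huK : ∀ᶠ i in l, u i ∈ K)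
    (hlim : ∀ δ > 0, ∀ᶠ i in l, V (u i) < δ) : Tendsto u l (𝓝ˢ A) := by
  refine (hasBasis_nhdsSet A).tendsto_right_iff.2 fun U ⟨hU, hAU⟩ => ?_
  obtain ⟨δ, hδ, hδV⟩ : ∃ δ > 0, ∀ y ∈ K \ U, δ ≤ V y :=
    (hK.diff hU).exists_forall_le' (hVK.mono sdiff_subset)
      fun y hy => hpos y ⟨hy.1, notMem_subset hAU hy.2⟩
  filter_upwards [huK, hlim δ hδ] with i hiK hiδ
  by_contra hiU
  exact (hδV (u i) ⟨hiK, hiU⟩).not_gt hiδ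

end SetConvergence

section LieDeriv

variable {E : Type*} [NormedAddCommGroup E] [NormedSpace ℝ E] {A D K : Set E} {V : E → ℝ}
  {f : E → E} {v : ℝ → E → E} {x : ℝ → E} {s : Set ℝ} {t₀ c δ C : ℝ}

/-- The Lie derivative `∇V · f` of the scalar function `V` along the vector field `f`: the rate of
change of `V` along solutions of `ẋ = f x`. It is expressed through the Fréchet derivative so that
no inner product is needed; its value is `0` where `V` is not differentiable. -/
noncomputable def lieDeriv (V : E → ℝ) (f : E → E) (y : E) : ℝ :=
  fderiv ℝ V y (f y)

theorem lieDeriv_eq_inner_gradient {H : Type*} [NormedAddCommGroup H] [InnerProductSpace ℝ H]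
    [CompleteSpace H] (V : H → ℝ) (f : H → H) (y : H) : lieDeriv V f y = ⟪gradient V y, f y⟫ :=
  inner_gradient_left.symm

theorem continuousOn_lieDeriv (hD : IsOpen D) (hV : ContDiffOn ℝ 1 V D) (hf : ContinuousOn f D) :
    ContinuousOn (lieDeriv V f) D :=
  (hV.continuousOn_fderiv_of_isOpen hD le_rfl).clm_apply hf

theorem lieDeriv_eq_zero_of_isLocalMin {y : E} (hy : IsLocalMin V y) : lieDeriv V f y = 0 := by
  rw [lieDeriv, hy.fderiv_eq_zero, zero_apply]

theorem lieDeriv_nonpos_of_neg_diff (hD : IsOpen D) (hV0 : ∀ y ∈ D ∩ A, V y = 0)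
    (hVpos : ∀ y ∈ D \ A, 0 < V y) (hneg : ∀ y ∈ D \ A, lieDeriv V f y < 0) :
    ∀ y ∈ D, lieDeriv V f y ≤ 0 := by
  intro y hy
  by_cases hyA : y ∈ A
  · have hmin : IsLocalMin V y := by
      filter_upwards [hD.mem_nhds hy] with z hz
      rw [hV0 y ⟨hy, hyA⟩]
      by_cases hzA : z ∈ A
      · exact (hV0 z ⟨hz, hzA⟩).ge
      · exact (hVpos z ⟨hz, hzA⟩).le
    exact (lieDeriv_eq_zero_of_isLocalMin hmin).le
  · exact (hneg y ⟨hy, hyA⟩).le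

theorem hasDerivWithinAt_comp_integralCurve {t : ℝ} (hx : IsIntegralCurveOn x v s)
    (hV : DifferentiableAt ℝ V (x t)) (ht : t ∈ s) :
    HasDerivWithinAt (V ∘ x) (lieDeriv V (v t) (x t)) s t :=
  hV.hasFDerivAt.comp_hasDerivWithinAt t (hx t ht)

theorem comp_integralCurve_sub_le_mul_sub (hs : Convex ℝ s) (hx : IsIntegralCurveOn x v s)
    (hV : ∀ t ∈ s, DifferentiableAt ℝ V (x t)) (hC : ∀ t ∈ s, lieDeriv V (v t) (x t) ≤ C)
    {a b : ℝ} (ha : a ∈ s) (hb : b ∈ s) (hab : a ≤ b) : V (x b) - V (x a) ≤ C * (b - a) := by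
  have hderivWithin (t : ℝ) (ht : t ∈ s) :
      HasDerivWithinAt (V ∘ x) (lieDeriv V (v t) (x t)) s t :=
    hasDerivWithinAt_comp_integralCurve hx (hV t ht) ht
  have hderiv (t : ℝ) (ht : t ∈ interior s) : HasDerivAt (V ∘ x) (lieDeriv V (v t) (x t)) t :=
    (hderivWithin t (interior_subset ht)).hasDerivAt (mem_interior_iff_mem_nhds.1 ht)
  exact hs.image_sub_le_mul_sub_of_deriv_le (fun t ht => (hderivWithin t ht).continuousWithinAt)
    (fun t ht => (hderiv t ht).differentiableAt.differentiableWithinAt)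
    (fun t ht => (hderiv t ht).deriv.trans_le (hC t (interior_subset ht))) a ha b hb hab

theorem antitoneOn_comp_integralCurve (hs : Convex ℝ s) (hx : IsIntegralCurveOn x v s)
    (hV : ∀ t ∈ s, DifferentiableAt ℝ V (x t)) (hL : ∀ t ∈ s, lieDeriv V (v t) (x t) ≤ 0) :
    AntitoneOn (V ∘ x) s := fun a ha b hb hab => by
  simpa only [zero_mul, sub_nonpos, Function.comp_apply] using
    comp_integralCurve_sub_le_mul_sub hs hx hV hL ha hb hab

theorem eventually_mem_and_le_of_lieDeriv_nonpos (hD : IsOpen D) (hV : DifferentiableOn ℝ V D)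
    (hL : ∀ t ≥ t₀, ∀ y ∈ D, lieDeriv V (v t) y ≤ 0) (hx : IsIntegralCurveOn x v (Ici t₀))
    (hx₀ : x t₀ ∈ D) : ∀ᶠ t in 𝓝[≥] t₀, x t ∈ D ∧ V (x t) ≤ V (x t₀) := by
  have hmem : ∀ᶠ t in 𝓝[≥] t₀, x t ∈ D :=
    (hx.continuousWithinAt self_mem_Ici).eventually_mem (hD.mem_nhds hx₀)
  obtain ⟨u, hu, huD⟩ := mem_nhdsGE_iff_exists_Icc_subset.1 hmem
  have hanti : AntitoneOn (V ∘ x) (Icc t₀ u) :=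
    antitoneOn_comp_integralCurve (convex_Icc t₀ u) (hx.mono Icc_subset_Ici_self)
      (fun t ht => hV.differentiableAt (hD.mem_nhds (huD ht)))
      fun t ht => hL t ht.1 (x t) (huD ht)
  filter_upwards [Icc_mem_nhdsGE hu] with t ht
  exact ⟨huD ht, hanti (left_mem_Icc.2 hu.le) ht ht.1⟩

theorem mem_sublevel_of_lieDeriv_nonpos (hD : IsOpen D) (hV : DifferentiableOn ℝ V D)
    (hL : ∀ t ≥ t₀, ∀ y ∈ D, lieDeriv V (v t) y ≤ 0) (hclosed : IsClosed {y ∈ D | V y ≤ c})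
    (hx : IsIntegralCurveOn x v (Ici t₀)) (hx₀ : x t₀ ∈ {y ∈ D | V y ≤ c}) :
    ∀ t ≥ t₀, x t ∈ {y ∈ D | V y ≤ c} := by
  intro T hT
  have hclosedTimes : IsClosed (x ⁻¹' {y ∈ D | V y ≤ c} ∩ Icc t₀ T) := by
    rw [inter_comm]
    exact (hx.continuousOn.mono Icc_subset_Ici_self).preimage_isClosed_of_isClosed
      isClosed_Icc hclosed
  refine hclosedTimes.Icc_subset_of_forall_mem_nhdsWithin hx₀ ?_ (right_mem_Icc.2 hT)
  rintro r ⟨⟨hrD, hrc⟩, hr, -⟩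
  have hstay := eventually_mem_and_le_of_lieDeriv_nonpos hD hV
    (fun t ht => hL t (hr.trans ht)) (hx.mono (Ici_subset_Ici.2 hr)) hrD
  filter_upwards [nhdsWithin_mono r Ioi_subset_Ici_self hstay] with t ht
  exact ⟨ht.1, ht.2.trans hrc⟩

theorem exists_notMem_of_lieDeriv_neg (hK : IsCompact K) (hV : ∀ y ∈ K, DifferentiableAt ℝ V y)
    (hcont : ContinuousOn (lieDeriv V f) K) (hneg : ∀ y ∈ K, lieDeriv V f y < 0)
    (hx : IsIntegralCurveOn x (fun _ => f) (Ici t₀)) : ∃ t ≥ t₀, x t ∉ K := by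
  by_contra! hxK
  obtain ⟨m, hm, hmL⟩ : ∃ m > 0, ∀ y ∈ K, m ≤ -lieDeriv V f y :=
    hK.exists_forall_le' hcont.neg fun y hy => neg_pos.2 (hneg y hy)
  obtain ⟨B, hB⟩ : BddBelow (V '' K) :=
    hK.bddBelow_image fun y hy => (hV y hy).continuousAt.continuousWithinAt
  have hdecay (t : ℝ) (ht : t ≥ t₀) : B + m * (t - t₀) ≤ V (x t₀) := by
    have hdrop : V (x t) - V (x t₀) ≤ -m * (t - t₀) :=
      comp_integralCurve_sub_le_mul_sub (convex_Ici t₀) hx (fun r hr => hV _ (hxK r hr))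
        (fun r hr => le_neg_of_le_neg (hmL _ (hxK r hr))) self_mem_Ici ht ht
    linarith [hB (mem_image_of_mem V (hxK t ht))]
  have hunbounded : Tendsto (fun t => B + m * (t - t₀)) atTop atTop :=
    tendsto_atTop_add_const_left _ _
      ((tendsto_atTop_add_const_right _ _ tendsto_id).const_mul_atTop hm)
  obtain ⟨t, ht, htV⟩ :=
    ((eventually_ge_atTop t₀).and (hunbounded.eventually_gt_atTop (V (x t₀)))).exists
  exact (hdecay t ht).not_gt htV

theorem eventually_lt_of_lieDeriv_neg (hK : IsCompact K) (hV : ∀ y ∈ K, DifferentiableAt ℝ V y)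
    (hcont : ContinuousOn (lieDeriv V f) K) (hL : ∀ y ∈ K, lieDeriv V f y ≤ 0)
    (hneg : ∀ y ∈ K, δ ≤ V y → lieDeriv V f y < 0)
    (hx : IsIntegralCurveOn x (fun _ => f) (Ici t₀)) (hxK : ∀ t ≥ t₀, x t ∈ K) :
    ∀ᶠ t in atTop, V (x t) < δ := by
  have hVK : ContinuousOn V K := fun y hy => (hV y hy).continuousAt.continuousWithinAt
  have hKδ : IsCompact (K ∩ V ⁻¹' Ici δ) :=
    hK.of_isClosed_subset (hVK.preimage_isClosed_of_isClosed hK.isClosed isClosed_Ici)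
      inter_subset_left
  obtain ⟨T, hT, hTK⟩ := exists_notMem_of_lieDeriv_neg hKδ (fun y hy => hV y hy.1)
    (hcont.mono inter_subset_left) (fun y hy => hneg y hy.1 hy.2) hx
  have hTδ : V (x T) < δ := lt_of_not_ge fun h => hTK ⟨hxK T hT, h⟩
  have hanti : AntitoneOn (V ∘ x) (Ici t₀) :=
    antitoneOn_comp_integralCurve (convex_Ici t₀) hx (fun t ht => hV _ (hxK t ht))
      fun t ht => hL _ (hxK t ht)
  filter_upwards [eventually_ge_atTop T] with t ht
  exact (hanti hT (hT.trans ht) ht).trans_lt hTδ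

theorem stmt_12_general (hD : IsOpen D) (hf : ContinuousOn f D) (hV : ContDiffOn ℝ 1 V D)
    (hV0 : ∀ y ∈ D ∩ A, V y = 0) (hVpos : ∀ y ∈ D \ A, 0 < V y)
    (hneg : ∀ y ∈ D \ A, lieDeriv V f y < 0) (hcomp : IsCompact {y ∈ D | V y ≤ c})
    (hx : IsIntegralCurveOn x (fun _ => f) (Ici t₀)) (hx₀ : x t₀ ∈ {y ∈ D | V y ≤ c}) :
    (∀ t ≥ t₀, x t ∈ {y ∈ D | V y ≤ c}) ∧ Tendsto x atTop (𝓝ˢ A) := by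
  have hVd : DifferentiableOn ℝ V D := hV.differentiableOn one_ne_zero
  have hL : ∀ y ∈ D, lieDeriv V f y ≤ 0 := lieDeriv_nonpos_of_neg_diff hD hV0 hVpos hneg
  have hinv : ∀ t ≥ t₀, x t ∈ {y ∈ D | V y ≤ c} :=
    mem_sublevel_of_lieDeriv_nonpos hD hVd (fun _ _ => hL) hcomp.isClosed hx hx₀
  have hsub : {y ∈ D | V y ≤ c} ⊆ D := sep_subset D _
  have hlim : ∀ δ > 0, ∀ᶠ t in atTop, V (x t) < δ := fun δ hδ =>
    eventually_lt_of_lieDeriv_neg hcomp (fun y hy => hVd.differentiableAt (hD.mem_nhds hy.1))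
      ((continuousOn_lieDeriv hD hV hf).mono hsub) (fun y hy => hL y hy.1)
      (fun y hy hyδ => hneg y ⟨hy.1, fun hyA => (hδ.trans_le hyδ).ne' (hV0 y ⟨hy.1, hyA⟩)⟩)
      hx hinv
  exact ⟨hinv, tendsto_nhdsSet_of_forall_eventually_lt hcomp (hV.continuousOn.mono hsub)
    (fun y hy => hVpos y ⟨hy.1.1, hy.2⟩) ((eventually_ge_atTop t₀).mono hinv) hlim⟩

end LieDeriv

/-- regions of attraction from Lyapunov sublevel sets: if `V` is a Lyapunov
function for the compact set `A` on the open set `D ⊇ A`, `c > 0`, and the sublevel set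
`V^c = {x ∈ D : V(x) ≤ c}` is compact, then `V^c` is forward invariant and is a region of
attraction of `A`. -/
theorem stmt_12 (n : ℕ) (A D : Set (EuclideanSpace ℝ (Fin n)))
    (hA : IsCompact A) (hD : IsOpen D) (hAD : A ⊆ D)
    (f : EuclideanSpace ℝ (Fin n) → EuclideanSpace ℝ (Fin n)) (hf : Continuous f)
    (V : EuclideanSpace ℝ (Fin n) → ℝ) (hV : ContDiffOn ℝ 1 V D)
    (hV0 : ∀ x ∈ A, V x = 0)
    (hVpos : ∀ x ∈ D \ A, 0 < V x)
    (hlie : ∀ x ∈ D \ A, ⟪gradient V x, f x⟫ < 0)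
    (c : ℝ) (hc : 0 < c) (hcomp : IsCompact {x ∈ D | V x ≤ c}) :
    ∀ x : ℝ → EuclideanSpace ℝ (Fin n),
      (∀ t : ℝ, 0 ≤ t → HasDerivAt x (f (x t)) t) →
      x 0 ∈ {x ∈ D | V x ≤ c} →
      (∀ t : ℝ, 0 ≤ t → x t ∈ {x ∈ D | V x ≤ c}) ∧
        Filter.Tendsto (fun t => Metric.infDist (x t) A) Filter.atTop (nhds 0) := by
  intro x hx hx0
  exact (stmt_12_general hD hf.continuousOn hV (fun y hy => hV0 y hy.2) hVpos
    (fun y hy => (lieDeriv_eq_inner_gradient V f y).trans_lt (hlie y hy)) hcomp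
    (fun t ht => (hx t ht).hasDerivWithinAt) hx0).imp_right (tendsto_infDist_nhdsSet A).comp
end
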